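/- Under the hypotheses (H1)–(H3) on the pressure P, with k(ρ) = ∫₀^ρ √(P'(y))/y dy and e(ρ) = ∫₀^ρ P(s)/s² ds, set θ(ρ) = (γ₁−1)/2 and γ(ρ) = γ₁ for ρ ≤ ρ_*, and θ(ρ) = (γ₂−1)/2 and γ(ρ) = γ₂ for ρ > ρ_*. Then there exists a function η̂ : (0,∞)×ℝ → ℝ of class C² such that: (a) η̂(ρ,u) = ½ρu² + ρe(ρ) whenever u ≥ k(ρ), and η̂(ρ,u) = −½ρu² − ρe(ρ) whenever u ≤ −k(ρ); (b) ∂²η̂/∂ρ²(ρ,u) = k'(ρ)² ∂²η̂/∂u²(ρ,u) for all (ρ,u) with |u| ≤ k(ρ); (c) there is a constant C > 0 with |η̂(ρ,u)| ≤ C(ρu² + ρ^{γ(ρ)}), |∂η̂/∂ρ(ρ,u)| ≤ C(u² + ρ^{2θ(ρ)}), and |∂η̂/∂u(ρ,u)| ≤ C(ρ|u| + ρ^{θ(ρ)+1}) for all (ρ,u) ∈ (0,∞)×ℝ. Moreover η̂ is the unique C² function satisfying (a) and (b) together with the derivative bounds in (c). -/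

import Mathlib

open Set MeasureTheory Filter

/-- The conditions (a), (b), (c) of the special entropy constructed by solving the
Goursat problem for the entropy equation. -/
def IsSpecialEntropy (ρstar γ₁ γ₂ : ℝ) (k e : ℝ → ℝ) (η : ℝ × ℝ → ℝ) : Prop :=
  ContDiffOn ℝ 2 η (Ioi 0 ×ˢ (univ : Set ℝ)) ∧
  (∀ ρ : ℝ, 0 < ρ → ∀ u : ℝ,
    (k ρ ≤ u → η (ρ, u) = 1/2 * ρ * u ^ 2 + ρ * e ρ) ∧
    (u ≤ -k ρ → η (ρ, u) = -(1/2 * ρ * u ^ 2 + ρ * e ρ))) ∧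
  (∀ ρ : ℝ, 0 < ρ → ∀ u : ℝ, |u| ≤ k ρ →
    deriv (deriv (fun r => η (r, u))) ρ
      = deriv k ρ ^ 2 * deriv (deriv (fun v => η (ρ, v))) u) ∧
  (∃ C : ℝ, 0 < C ∧ ∀ ρ : ℝ, 0 < ρ → ∀ u : ℝ,
    |η (ρ, u)| ≤ C * (ρ * u ^ 2 + ρ ^ (if ρ ≤ ρstar then γ₁ else γ₂)) ∧
    |deriv (fun r => η (r, u)) ρ|
      ≤ C * (u ^ 2 + ρ ^ (2 * (if ρ ≤ ρstar then (γ₁ - 1)/2 else (γ₂ - 1)/2))) ∧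
    |deriv (fun v => η (ρ, v)) u|
      ≤ C * (ρ * |u| + ρ ^ ((if ρ ≤ ρstar then (γ₁ - 1)/2 else (γ₂ - 1)/2) + 1)))

/-!
With `c = k'` and the integrating factor `μ = c ^ (-1/2)`, the equation `η_ρρ = c² η_uu` becomes a
diagonal system: along the characteristics `u ± k = const` each of two unknowns, multiplied by `μ`,
has the other one, multiplied by `μ'`, as its derivative. Integrating from the vacuum `ρ = 0` is a
contraction on functions bounded by a multiple of a weight `φ`: the inequality `2P' + ρP'' ≥ 0`
says that `μ'/μ ≤ 1/ρ`, which gives a ratio below `1` for `φ = k` wherever `μ' ≥ 0`. The power laws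
imply `μ' ≥ 0` near the vacuum and at high density, and in between a bounded factor `E` in
`φ = k E` absorbs the negative part of `μ'`.

The contraction, on functions `|u| + O(φ)`, has a fixed point `f`. Its even part in `u` is the mixed
derivative `η_ρu` of the entropy, which is recovered by integration, and outside the cone
`|u| ≤ k` it equals `|u|`, which gives the boundary data. The same contraction, applied to the
difference of two entropies, yields uniqueness.
-/

section Comparison

open scoped Topology

variable {E : Type*} [NormedAddCommGroup E] {a b : ℝ} {y y' : ℝ → E} {F F' : ℝ → ℝ}

theorem continuousOn_update_Icc_of_tendsto {X : Type*} [TopologicalSpace X] {f : ℝ → X} {l : X}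
    (hf : ContinuousOn f (Ioc a b)) (ha : Tendsto f (𝓝[>] a) (𝓝 l)) :
    ContinuousOn (Function.update f a l) (Icc a b) := by
  rw [continuousOn_update_iff, Icc_sdiff_left]
  exact ⟨hf, fun _ => ha.mono_left (nhdsWithin_mono _ fun _ hs => hs.1)⟩

theorem hasDerivAt_update_of_lt [NormedSpace ℝ E] {s : ℝ} {v l : E} (h : HasDerivAt y v s)
    (hs : a < s) : HasDerivAt (Function.update y a l) v s :=
  h.congr_of_eventuallyEq <| by
    filter_upwards [Ioi_mem_nhds hs] with t ht
    exact Function.update_of_ne (ne_of_gt ht) _ _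

theorem norm_le_of_norm_deriv_le_of_tendsto_zero [NormedSpace ℝ E] (hab : a < b)
    (hy : ∀ s ∈ Ioc a b, HasDerivAt y (y' s) s) (hF : ∀ s ∈ Ioc a b, HasDerivAt F (F' s) s)
    (hle : ∀ s ∈ Ioc a b, ‖y' s‖ ≤ F' s)
    (hy0 : Tendsto y (𝓝[>] a) (𝓝 0)) (hF0 : Tendsto F (𝓝[>] a) (𝓝 0)) : ‖y b‖ ≤ F b := by
  have hdist : ∀ s ∈ Ioc a b, ‖y b - y s‖ ≤ F b - F s := fun s hs => by
    have hsub : Icc s b ⊆ Ioc a b := fun t ht => ⟨hs.1.trans_le ht.1, ht.2⟩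
    refine image_norm_le_of_norm_deriv_right_le_deriv_boundary' (f := fun t => y t - y s)
      (B := fun t => F t - F s) (f' := y') (B' := F') ?_ ?_ (by simp) ?_ ?_ ?_
      (right_mem_Icc.2 hs.2)
    · exact fun t ht => ((hy t (hsub ht)).sub_const _).continuousAt.continuousWithinAt
    · exact fun t ht => ((hy t (hsub (Ico_subset_Icc_self ht))).sub_const _).hasDerivWithinAt
    · exact fun t ht => ((hF t (hsub ht)).sub_const _).continuousAt.continuousWithinAt
    · exact fun t ht => ((hF t (hsub (Ico_subset_Icc_self ht))).sub_const _).hasDerivWithinAt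
    · exact fun t ht => hle t (hsub (Ico_subset_Icc_self ht))
  have hlim := le_of_tendsto_of_tendsto (tendsto_const_nhds.sub hy0).norm
    (tendsto_const_nhds.sub hF0) (eventually_of_mem (Ioc_mem_nhdsGT hab) hdist)
  simpa using hlim

theorem eq_of_hasDerivAt_of_tendsto_sub_zero [NormedSpace ℝ E] {z : ℝ → E} (hab : a < b)
    (hy : ∀ s ∈ Ioc a b, HasDerivAt y (y' s) s) (hz : ∀ s ∈ Ioc a b, HasDerivAt z (y' s) s)
    (hyz : Tendsto (fun s => y s - z s) (𝓝[>] a) (𝓝 0)) : y b = z b := by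
  have h := norm_le_of_norm_deriv_le_of_tendsto_zero (F := 0) (F' := 0) hab
    (fun s hs => (hy s hs).sub (hz s hs)) (fun s _ => hasDerivAt_const s 0) (by simp) hyz
    tendsto_const_nhds
  exact sub_eq_zero.1 (norm_le_zero_iff.1 h)

theorem le_of_deriv_le_of_tendsto_zero {G G' : ℝ → ℝ} (hab : a < b)
    (hG : ∀ s ∈ Ioc a b, HasDerivAt G (G' s) s) (hF : ∀ s ∈ Ioc a b, HasDerivAt F (F' s) s)
    (hle : ∀ s ∈ Ioc a b, G' s ≤ F' s)
    (hG0 : Tendsto G (𝓝[>] a) (𝓝 0)) (hF0 : Tendsto F (𝓝[>] a) (𝓝 0)) : G b ≤ F b := by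
  have h := norm_le_of_norm_deriv_le_of_tendsto_zero (y := fun _ => (0 : ℝ)) (y' := 0)
    (F := fun s => F s - G s) hab (fun s _ => hasDerivAt_const s 0)
    (fun s hs => (hF s hs).sub (hG s hs)) (fun s hs => by simpa using hle s hs)
    tendsto_const_nhds (by simpa using hF0.sub hG0)
  simpa using h

theorem pos_of_hasDerivAt_pos_of_tendsto_zero {G G' : ℝ → ℝ}
    (hab : a < b) (hG : ∀ s ∈ Ioc a b, HasDerivAt G (G' s) s) (hpos : ∀ s ∈ Ioc a b, 0 < G' s)
    (hG0 : Tendsto G (𝓝[>] a) (𝓝 0)) : 0 < G b := by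
  obtain ⟨m, ham, hmb⟩ := exists_between hab
  have hsub : Icc m b ⊆ Ioc a b := Icc_subset_Ioc_iff hmb.le |>.2 ⟨ham, le_rfl⟩
  have hnonneg : 0 ≤ G m :=
    le_of_deriv_le_of_tendsto_zero ham (fun s _ => hasDerivAt_const s (0 : ℝ))
      (fun s hs => hG s ⟨hs.1, hs.2.trans hmb.le⟩)
      (fun s hs => (hpos s ⟨hs.1, hs.2.trans hmb.le⟩).le) tendsto_const_nhds hG0
  refine hnonneg.trans_lt (strictMonoOn_of_deriv_pos (convex_Icc m b)
    (fun s hs => (hG s (hsub hs)).continuousAt.continuousWithinAt) (fun s hs => ?_)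
    (left_mem_Icc.2 hmb.le) (right_mem_Icc.2 hmb.le) hmb)
  rw [(hG s (hsub (interior_subset hs))).deriv]
  exact hpos s (hsub (interior_subset hs))

theorem integral_eq_of_hasDerivAt_of_tendsto_zero [NormedSpace ℝ E] [CompleteSpace E]
    (hab : a < b) (hy : ∀ s ∈ Ioc a b, HasDerivAt y (y' s) s)
    (hint : IntervalIntegrable y' volume a b)
    (hy0 : Tendsto y (𝓝[>] a) (𝓝 0)) : ∫ s in a..b, y' s = y b := by
  rw [intervalIntegral.integral_eq_sub_of_hasDerivAt_of_tendsto hab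
    (fun s hs => hy s (Ioo_subset_Ioc_self hs)) hint hy0
    ((hy b (right_mem_Ioc.2 hab)).continuousAt.tendsto.mono_left nhdsWithin_le_nhds), sub_zero]

theorem intervalIntegrable_of_norm_le_deriv (hab : a < b)
    (hmeas : AEStronglyMeasurable y (volume.restrict (Ioc a b)))
    (hF : ∀ s ∈ Ioc a b, HasDerivAt F (F' s) s) (hle : ∀ s ∈ Ioc a b, ‖y s‖ ≤ F' s)
    (hF0 : Tendsto F (𝓝[>] a) (𝓝 0)) :
    IntervalIntegrable F' volume a b ∧ IntervalIntegrable y volume a b := by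
  have hF' : IntegrableOn F' (Ioc a b) := by
    refine intervalIntegral.integrableOn_deriv_of_nonneg (g := Function.update F a 0)
      (continuousOn_update_Icc_of_tendsto
        (fun s hs => (hF s hs).continuousAt.continuousWithinAt) hF0) (fun s hs => ?_)
      (fun s hs => (norm_nonneg _).trans (hle s (Ioo_subset_Ioc_self hs)))
    exact hasDerivAt_update_of_lt (hF s (Ioo_subset_Ioc_self hs)) hs.1
  rw [intervalIntegrable_iff_integrableOn_Ioc_of_le hab.le,
    intervalIntegrable_iff_integrableOn_Ioc_of_le hab.le]
  exact ⟨hF', hF'.mono' hmeas (by filter_upwards [ae_restrict_mem measurableSet_Ioc] using hle)⟩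

theorem norm_integral_le_of_norm_le_deriv [NormedSpace ℝ E] (hab : a < b)
    (hmeas : AEStronglyMeasurable y (volume.restrict (Ioc a b)))
    (hF : ∀ s ∈ Ioc a b, HasDerivAt F (F' s) s) (hle : ∀ s ∈ Ioc a b, ‖y s‖ ≤ F' s)
    (hF0 : Tendsto F (𝓝[>] a) (𝓝 0)) : ‖∫ s in a..b, y s‖ ≤ F b := by
  have hF' := (intervalIntegrable_of_norm_le_deriv hab hmeas hF hle hF0).1
  rw [← integral_eq_of_hasDerivAt_of_tendsto_zero hab hF hF' hF0]
  exact intervalIntegral.norm_integral_le_of_norm_le hab.le (ae_of_all _ hle) hF'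

end Comparison

section PartialDerivatives

open scoped Topology

/-- `F₁ = ∂F/∂ρ` and `F₂ = ∂F/∂u` are the partial derivatives of the function `F` of `(ρ, u)`, and
they are continuous, on `U`. -/
structure HasPartialsOn (F F₁ F₂ : ℝ × ℝ → ℝ) (U : Set (ℝ × ℝ)) : Prop where
  fst : ∀ x ∈ U, HasDerivAt (fun s => F (s, x.2)) (F₁ x) x.1
  snd : ∀ x ∈ U, HasDerivAt (fun v => F (x.1, v)) (F₂ x) x.2
  continuousOn_fst : ContinuousOn F₁ U
  continuousOn_snd : ContinuousOn F₂ U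

variable {F F₁ F₂ : ℝ × ℝ → ℝ} {U : Set (ℝ × ℝ)}

namespace HasPartialsOn

theorem mono {V : Set (ℝ × ℝ)} (h : HasPartialsOn F F₁ F₂ U) (hV : V ⊆ U) :
    HasPartialsOn F F₁ F₂ V where
  fst x hx := h.fst x (hV hx)
  snd x hx := h.snd x (hV hx)
  continuousOn_fst := h.continuousOn_fst.mono hV
  continuousOn_snd := h.continuousOn_snd.mono hV

theorem sub {G G₁ G₂ : ℝ × ℝ → ℝ} (hF : HasPartialsOn F F₁ F₂ U) (hG : HasPartialsOn G G₁ G₂ U) :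
    HasPartialsOn (fun x => F x - G x) (fun x => F₁ x - G₁ x) (fun x => F₂ x - G₂ x) U where
  fst x hx := (hF.fst x hx).sub (hG.fst x hx)
  snd x hx := (hF.snd x hx).sub (hG.snd x hx)
  continuousOn_fst := hF.continuousOn_fst.sub hG.continuousOn_fst
  continuousOn_snd := hF.continuousOn_snd.sub hG.continuousOn_snd

theorem hasFDerivAt (h : HasPartialsOn F F₁ F₂ U) (hU : IsOpen U) {x : ℝ × ℝ} (hx : x ∈ U) :
    HasFDerivAt F (F₁ x • ContinuousLinearMap.fst ℝ ℝ ℝ + F₂ x • ContinuousLinearMap.snd ℝ ℝ ℝ)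
      x := by
  have hUx := hU.mem_nhds hx
  have hspan := (ContinuousLinearMap.toSpanSingletonCLE (𝕜 := ℝ) (E := ℝ)).continuous
  have hstrict := hasStrictFDerivAt_uncurry_coprod (𝕜 := ℝ) (u := x) (f := fun s v => F (s, v))
    (f₁ := fun s v => .toSpanSingleton ℝ (F₁ (s, v)))
    (f₂ := fun s v => .toSpanSingleton ℝ (F₂ (s, v)))
    (by filter_upwards [hUx] with y hy using (h.fst y hy).hasFDerivAt)
    (by filter_upwards [hUx] with y hy using (h.snd y hy).hasFDerivAt)
    (hspan.continuousAt.comp (h.continuousOn_fst.continuousAt hUx))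
    (hspan.continuousAt.comp (h.continuousOn_snd.continuousAt hUx))
  refine hstrict.hasFDerivAt.congr_fderiv ?_
  ext <;> simp [Function.HasUncurry.uncurry]

theorem continuousOn (h : HasPartialsOn F F₁ F₂ U) (hU : IsOpen U) : ContinuousOn F U :=
  fun _ hx => (h.hasFDerivAt hU hx).continuousAt.continuousWithinAt

theorem eq_zero_of_eq_zero (h : HasPartialsOn F F₁ F₂ U) (hU : IsOpen U) (hF : ∀ x ∈ U, F x = 0) :
    ∀ x ∈ U, F₁ x = 0 ∧ F₂ x = 0 := fun x hx => by
  have hzero : HasFDerivAt F (0 : ℝ × ℝ →L[ℝ] ℝ) x :=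
    (hasFDerivAt_const (0 : ℝ) x).congr_of_eventuallyEq <| by
      filter_upwards [hU.mem_nhds hx] with y hy using hF y hy
  have heq := (h.hasFDerivAt hU hx).unique hzero
  exact ⟨by simpa using DFunLike.congr_fun heq (1, 0),
    by simpa using DFunLike.congr_fun heq (0, 1)⟩

theorem hasDerivAt_comp_graph (h : HasPartialsOn F F₁ F₂ U) (hU : IsOpen U) {g : ℝ → ℝ} {s g' : ℝ}
    (hs : (s, g s) ∈ U) (hg : HasDerivAt g g' s) :
    HasDerivAt (fun t => F (t, g t)) (F₁ (s, g s) + F₂ (s, g s) * g') s :=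
  ((h.hasFDerivAt hU hs).comp_hasDerivAt s ((hasDerivAt_id s).prodMk hg)).congr_deriv (by simp)

theorem contDiffOn_succ (h : HasPartialsOn F F₁ F₂ U) (hU : IsOpen U) {n : ℕ}
    (h₁ : ContDiffOn ℝ n F₁ U) (h₂ : ContDiffOn ℝ n F₂ U) : ContDiffOn ℝ (n + 1) F U := by
  rw [contDiffOn_succ_iff_fderiv_of_isOpen hU]
  refine ⟨fun x hx => (h.hasFDerivAt hU hx).differentiableAt.differentiableWithinAt, by simp, ?_⟩
  exact ((h₁.smul contDiffOn_const).add (h₂.smul contDiffOn_const)).congr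
    fun x hx => (h.hasFDerivAt hU hx).fderiv

theorem contDiffOn_one (h : HasPartialsOn F F₁ F₂ U) (hU : IsOpen U) : ContDiffOn ℝ 1 F U := by
  simpa using h.contDiffOn_succ hU (n := 0) (contDiffOn_zero.2 h.continuousOn_fst)
    (contDiffOn_zero.2 h.continuousOn_snd)

end HasPartialsOn

theorem hasPartialsOn_of_contDiffOn (hU : IsOpen U) (h : ContDiffOn ℝ 1 F U) :
    HasPartialsOn F (fun x => fderiv ℝ F x (1, 0)) (fun x => fderiv ℝ F x (0, 1)) U where
  fst x hx :=
    ((h.contDiffAt (hU.mem_nhds hx)).differentiableAt one_ne_zero).hasFDerivAt.comp_hasDerivAt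
      x.1 ((hasDerivAt_id x.1).prodMk (hasDerivAt_const x.1 x.2))
  snd x hx :=
    ((h.contDiffAt (hU.mem_nhds hx)).differentiableAt one_ne_zero).hasFDerivAt.comp_hasDerivAt
      x.2 ((hasDerivAt_const x.2 x.1).prodMk (hasDerivAt_id x.2))
  continuousOn_fst := (h.continuousOn_fderiv_of_isOpen hU le_rfl).clm_apply continuousOn_const
  continuousOn_snd := (h.continuousOn_fderiv_of_isOpen hU le_rfl).clm_apply continuousOn_const

/-- `p = η_ρ`, `r = η_u`, `D = η_ρρ`, `A = η_ρu` and `B = η_uu` are the partial derivatives of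
first and second order of `η`, and they are continuous, on `U`. -/
structure HasSecondPartialsOn (η p r D A B : ℝ × ℝ → ℝ) (U : Set (ℝ × ℝ)) : Prop where
  zero : HasPartialsOn η p r U
  fst : HasPartialsOn p D A U
  snd : HasPartialsOn r A B U

variable {η p r D A B : ℝ × ℝ → ℝ}

theorem HasSecondPartialsOn.contDiffOn (h : HasSecondPartialsOn η p r D A B U) (hU : IsOpen U) :
    ContDiffOn ℝ 2 η U := by
  simpa [one_add_one_eq_two] using
    h.zero.contDiffOn_succ hU (n := 1) (h.fst.contDiffOn_one hU) (h.snd.contDiffOn_one hU)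

theorem exists_hasSecondPartialsOn (hU : IsOpen U) (h : ContDiffOn ℝ 2 η U) :
    ∃ p r D A B, HasSecondPartialsOn η p r D A B U := by
  have hdir (v : ℝ × ℝ) : ContDiffOn ℝ 1 (fun x => fderiv ℝ η x v) U :=
    (h.fderiv_of_isOpen hU (by norm_num)).clm_apply contDiffOn_const
  have hsnd := hasPartialsOn_of_contDiffOn hU (hdir (0, 1))
  have hfderiv (v w : ℝ × ℝ) {x : ℝ × ℝ} (hx : x ∈ U) :
      fderiv ℝ (fun y => fderiv ℝ η y v) x w = fderiv ℝ (fderiv ℝ η) x w v := by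
    have hd := ((h.fderiv_of_isOpen hU (m := 1) (by norm_num)).contDiffAt
      (hU.mem_nhds hx)).differentiableAt one_ne_zero
    simp [fderiv_clm_apply hd (differentiableAt_const v)]
  have hsymm : ∀ x ∈ U, fderiv ℝ (fun y => fderiv ℝ η y (0, 1)) x (1, 0) =
      fderiv ℝ (fun y => fderiv ℝ η y (1, 0)) x (0, 1) := fun x hx => by
    rw [hfderiv _ _ hx, hfderiv _ _ hx]
    exact ((h.contDiffAt (hU.mem_nhds hx)).isSymmSndFDerivAt (by simp)).eq _ _
  have hfst := hasPartialsOn_of_contDiffOn hU (hdir (1, 0))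
  exact ⟨_, _, _, _, _, hasPartialsOn_of_contDiffOn hU (h.of_le one_le_two), hfst,
    ⟨fun x hx => hsymm x hx ▸ hsnd.fst x hx, hsnd.snd, hfst.continuousOn_snd,
      hsnd.continuousOn_snd⟩⟩

end PartialDerivatives

/-- The domain `ρ > 0` of the entropies, as a set of pairs `(ρ, u)`. -/
abbrev halfPlane : Set (ℝ × ℝ) := Ioi 0 ×ˢ (univ : Set ℝ)

theorem isOpen_halfPlane : IsOpen halfPlane := isOpen_Ioi.prod isOpen_univ

theorem mk_mem_halfPlane {ρ u : ℝ} : (ρ, u) ∈ halfPlane ↔ 0 < ρ := by simp [halfPlane]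

section Leibniz

open scoped Topology

variable {X Y : ℝ × ℝ → ℝ} {ρ : ℝ}

theorem continuous_section_of_continuousOn_halfPlane {Z : Type*} [TopologicalSpace Z]
    {f : ℝ × ℝ → Z} (hf : ContinuousOn f halfPlane) (hρ : 0 < ρ) : Continuous fun v => f (ρ, v) :=
  hf.comp_continuous (by fun_prop) fun _ => mk_mem_halfPlane.2 hρ

theorem hasPartialsOn_integral_of_continuous (hX : Continuous X) (hY : Continuous Y)
    (hXY : ∀ t v, HasDerivAt (fun t => X (t, v)) (Y (t, v)) t) :
    HasPartialsOn (fun x => ∫ v in (0 : ℝ)..x.2, X (x.1, v))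
      (fun x => ∫ v in (0 : ℝ)..x.2, Y (x.1, v)) X univ where
  fst x _ := by
    obtain ⟨K, hK⟩ := ((isCompact_closedBall x.1 1).prod
      (isCompact_uIcc (a := (0 : ℝ)) (b := x.2))).exists_bound_of_continuousOn hY.continuousOn
    have hsection {Z : ℝ × ℝ → ℝ} (hZ : Continuous Z) (t : ℝ) : Continuous fun v => Z (t, v) :=
      hZ.comp (by fun_prop)
    exact (intervalIntegral.hasDerivAt_integral_of_dominated_loc_of_deriv_le (μ := volume)
      (bound := fun _ => K) (Metric.closedBall_mem_nhds _ one_pos)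
      (.of_forall fun t => (hsection hX t).aestronglyMeasurable)
      ((hsection hX x.1).intervalIntegrable _ _) (hsection hY x.1).aestronglyMeasurable
      (ae_of_all _ fun v hv t ht => hK (t, v) ⟨ht, uIoc_subset_uIcc hv⟩) intervalIntegrable_const
      (ae_of_all _ fun v _ t _ => hXY t v)).2
  snd x _ := ((show Continuous fun v => X (x.1, v) from
    hX.comp (by fun_prop)).integral_hasStrictDerivAt 0 x.2).hasDerivAt
  continuousOn_fst :=
    (intervalIntegral.continuous_parametric_intervalIntegral_of_continuous
      (f := fun (x : ℝ × ℝ) v => Y (x.1, v)) (hY.comp (by fun_prop)) continuous_snd).continuousOn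
  continuousOn_snd := hX.continuousOn

-- The substitution `ρ = exp t` turns the half plane into a plane.
theorem hasDerivAt_integral_zero_moving_endpoint (hX : ContinuousOn X halfPlane)
    (hY : ContinuousOn Y halfPlane)
    (hXY : ∀ s, 0 < s → ∀ v, HasDerivAt (fun s => X (s, v)) (Y (s, v)) s) (hρ : 0 < ρ)
    {β : ℝ → ℝ} {β' : ℝ} (hβ : HasDerivAt β β' ρ) :
    HasDerivAt (fun s => ∫ v in (0 : ℝ)..β s, X (s, v))
      ((∫ v in (0 : ℝ)..β ρ, Y (ρ, v)) + X (ρ, β ρ) * β') ρ := by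
  have hexp : Continuous fun x : ℝ × ℝ => (Real.exp x.1, x.2) := by fun_prop
  have hmem (x : ℝ × ℝ) : (Real.exp x.1, x.2) ∈ halfPlane := mk_mem_halfPlane.2 (Real.exp_pos _)
  have hpartials := hasPartialsOn_integral_of_continuous
    (X := fun x => X (Real.exp x.1, x.2)) (Y := fun x => Y (Real.exp x.1, x.2) * Real.exp x.1)
    (hX.comp_continuous hexp hmem)
    ((hY.comp_continuous hexp hmem).mul (Real.continuous_exp.comp continuous_fst))
    fun t v => (hXY _ (Real.exp_pos t) v).comp t (Real.hasDerivAt_exp t)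
  have hchain := (hpartials.hasFDerivAt isOpen_univ (mem_univ (Real.log ρ, β ρ))).comp_hasDerivAt ρ
    ((Real.hasDerivAt_log hρ.ne').prodMk hβ)
  refine (hchain.congr_of_eventuallyEq ?_).congr_deriv ?_
  · filter_upwards [Ioi_mem_nhds hρ] with s hs
    simp [Real.exp_log hs]
  · simp [Real.exp_log hρ, hρ.ne']

theorem hasDerivAt_integral_moving_endpoints (hX : ContinuousOn X halfPlane)
    (hY : ContinuousOn Y halfPlane)
    (hXY : ∀ s, 0 < s → ∀ v, HasDerivAt (fun s => X (s, v)) (Y (s, v)) s) (hρ : 0 < ρ)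
    {α β : ℝ → ℝ} {α' β' : ℝ} (hα : HasDerivAt α α' ρ) (hβ : HasDerivAt β β' ρ) :
    HasDerivAt (fun s => ∫ v in α s..β s, X (s, v))
      ((∫ v in α ρ..β ρ, Y (ρ, v)) + X (ρ, β ρ) * β' - X (ρ, α ρ) * α') ρ := by
  have hint {Z : ℝ × ℝ → ℝ} (hZ : ContinuousOn Z halfPlane) {s : ℝ} (hs : 0 < s) (a b : ℝ) :=
    (continuous_section_of_continuousOn_halfPlane hZ hs).intervalIntegrable (μ := volume) a b
  have hsub := (hasDerivAt_integral_zero_moving_endpoint hX hY hXY hρ hβ).sub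
    (hasDerivAt_integral_zero_moving_endpoint hX hY hXY hρ hα)
  refine (hsub.congr_of_eventuallyEq ?_).congr_deriv ?_
  · filter_upwards [Ioi_mem_nhds hρ] with s hs
    exact (intervalIntegral.integral_interval_sub_left (hint hX hs _ _) (hint hX hs _ _)).symm
  · rw [← intervalIntegral.integral_interval_sub_left (hint hY hρ 0 (β ρ)) (hint hY hρ 0 (α ρ))]
    ring

end Leibniz

section DampedWave

open scoped Topology

/-- The integrating factor `μ = c^(-1/2)` of the diagonal form of `η_ρρ = c² η_uu`. -/
noncomputable def transportFactor (c : ℝ → ℝ) (ρ : ℝ) : ℝ := (√(c ρ))⁻¹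

theorem hasDerivAt_transportFactor {c : ℝ → ℝ} {c' ρ : ℝ} (hc : HasDerivAt c c' ρ)
    (hpos : 0 < c ρ) :
    HasDerivAt (transportFactor c) (-(c' / (2 * c ρ)) * transportFactor c ρ) ρ := by
  have hsqrt : √(c ρ) ≠ 0 := (Real.sqrt_pos.2 hpos).ne'
  refine ((hc.sqrt hpos.ne').inv hsqrt).congr_deriv ?_
  rw [transportFactor]
  nth_rw 3 [← Real.sq_sqrt hpos.le]
  field_simp

/-- Transport with the integrating factor `μ` of `c` maps functions bounded by the weight `w` to
functions bounded by `q w`, because `|μ'| w ≤ q (μ w)'`. -/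
structure HasTransportRatio (c : ℝ → ℝ) (q : ℝ) (w : ℝ → ℝ) : Prop where
  differentiableAt : ∀ ρ, 0 < ρ → DifferentiableAt ℝ w ρ
  abs_deriv_mul_le : ∀ ρ, 0 < ρ →
    |deriv (transportFactor c) ρ| * w ρ ≤ q * deriv (fun s => transportFactor c s * w s) ρ

/-- A wave equation `η_ρρ = c² η_uu` on the half plane `ρ > 0`, with characteristics `u = ± k`
issuing from `ρ = 0`, and a damping factor `E`, bounded below by `M⁻¹`, that makes transport along
characteristics a contraction of ratio `q` in the weight `k E`. -/
structure DampedWave where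
  c : ℝ → ℝ
  k : ℝ → ℝ
  E : ℝ → ℝ
  q : ℝ
  M : ℝ
  contDiffOn_c : ContDiffOn ℝ 1 c (Ioi 0)
  c_pos : ∀ ρ, 0 < ρ → 0 < c ρ
  tendsto_c : Tendsto c (𝓝[>] 0) atTop
  hasDerivAt_k : ∀ ρ, 0 < ρ → HasDerivAt k (c ρ) ρ
  tendsto_k : Tendsto k (𝓝[>] 0) (𝓝 0)
  mul_c_le : ∀ ρ, 0 < ρ → ρ * c ρ ≤ M * k ρ
  M_pos : 0 < M
  E_le_one : ∀ ρ, 0 < ρ → E ρ ≤ 1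
  one_le_M_mul_E : ∀ ρ, 0 < ρ → 1 ≤ M * E ρ
  q_pos : 0 < q
  q_lt_one : q < 1
  transport_E : HasTransportRatio c 1 E
  transport_weight : HasTransportRatio c q (fun ρ => k ρ * E ρ)

namespace DampedWave

/-- The integrating factor of the wave. -/
noncomputable def μ (W : DampedWave) : ℝ → ℝ := transportFactor W.c

/-- The derivative of the integrating factor. -/
noncomputable def μ' (W : DampedWave) : ℝ → ℝ := deriv W.μ

/-- The weight `k E` in which transport along characteristics is a contraction. -/
def φ (W : DampedWave) (ρ : ℝ) : ℝ := W.k ρ * W.E ρ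

variable (W : DampedWave) {ρ s : ℝ}

theorem k_strictMonoOn : StrictMonoOn W.k (Ioi 0) := by
  refine strictMonoOn_of_deriv_pos (convex_Ioi 0)
    (fun s hs => (W.hasDerivAt_k s hs).continuousAt.continuousWithinAt) fun s hs => ?_
  rw [interior_Ioi] at hs
  exact (W.hasDerivAt_k s hs).deriv ▸ W.c_pos s hs

theorem k_le (hs : 0 < s) (hsρ : s ≤ ρ) : W.k s ≤ W.k ρ :=
  W.k_strictMonoOn.monotoneOn hs (hs.trans_le hsρ) hsρ

theorem k_pos (hρ : 0 < ρ) : 0 < W.k ρ :=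
  pos_of_hasDerivAt_pos_of_tendsto_zero hρ (fun s hs => W.hasDerivAt_k s hs.1)
    (fun s hs => W.c_pos s hs.1) W.tendsto_k

theorem continuousOn_k : ContinuousOn W.k (Ioi 0) := fun s hs =>
  (W.hasDerivAt_k s hs).continuousAt.continuousWithinAt

theorem hasDerivAt_c (hρ : 0 < ρ) : HasDerivAt W.c (deriv W.c ρ) ρ :=
  ((W.contDiffOn_c.contDiffAt (Ioi_mem_nhds hρ)).differentiableAt one_ne_zero).hasDerivAt

theorem contDiffOn_μ : ContDiffOn ℝ 1 W.μ (Ioi 0) :=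
  (W.contDiffOn_c.sqrt fun ρ hρ => (W.c_pos ρ hρ).ne').inv
    fun ρ hρ => (Real.sqrt_pos.2 (W.c_pos ρ hρ)).ne'

theorem hasDerivAt_μ (hρ : 0 < ρ) : HasDerivAt W.μ (W.μ' ρ) ρ :=
  ((W.contDiffOn_μ.contDiffAt (Ioi_mem_nhds hρ)).differentiableAt one_ne_zero).hasDerivAt

theorem continuousOn_μ' : ContinuousOn W.μ' (Ioi 0) :=
  W.contDiffOn_μ.continuousOn_deriv_of_isOpen isOpen_Ioi le_rfl

theorem μ_pos (hρ : 0 < ρ) : 0 < W.μ ρ := inv_pos.2 (Real.sqrt_pos.2 (W.c_pos ρ hρ))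

theorem μ_sq_mul_c (hρ : 0 < ρ) : W.μ ρ ^ 2 * W.c ρ = 1 := by
  rw [μ, transportFactor, inv_pow, Real.sq_sqrt (W.c_pos ρ hρ).le,
    inv_mul_cancel₀ (W.c_pos ρ hρ).ne']

theorem two_mul_μ'_mul_c (hρ : 0 < ρ) : 2 * W.μ' ρ * W.c ρ + W.μ ρ * deriv W.c ρ = 0 := by
  rw [μ', μ, (hasDerivAt_transportFactor (W.hasDerivAt_c hρ) (W.c_pos ρ hρ)).deriv]
  field_simp [(W.c_pos ρ hρ).ne']
  ring

theorem tendsto_μ : Tendsto W.μ (𝓝[>] 0) (𝓝 0) :=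
  (Real.tendsto_sqrt_atTop.comp W.tendsto_c).inv_tendsto_atTop

theorem E_pos (hρ : 0 < ρ) : 0 < W.E ρ :=
  pos_of_mul_pos_right (one_pos.trans_le (W.one_le_M_mul_E ρ hρ)) W.M_pos.le

theorem φ_pos (hρ : 0 < ρ) : 0 < W.φ ρ := mul_pos (W.k_pos hρ) (W.E_pos hρ)

theorem φ_le_k (hρ : 0 < ρ) : W.φ ρ ≤ W.k ρ :=
  mul_le_of_le_one_right (W.k_pos hρ).le (W.E_le_one ρ hρ)

theorem k_le_M_mul_φ (hρ : 0 < ρ) : W.k ρ ≤ W.M * W.φ ρ := by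
  have hk := mul_le_mul_of_nonneg_left (W.one_le_M_mul_E ρ hρ) (W.k_pos hρ).le
  rw [φ]
  linarith

theorem tendsto_φ : Tendsto W.φ (𝓝[>] 0) (𝓝 0) :=
  squeeze_zero' (eventually_mem_nhdsWithin.mono fun _ hs => (W.φ_pos hs).le)
    (eventually_mem_nhdsWithin.mono fun _ hs => W.φ_le_k hs) W.tendsto_k

theorem continuousOn_φ : ContinuousOn W.φ (Ioi 0) := fun s hs =>
  (W.transport_weight.differentiableAt s hs).continuousAt.continuousWithinAt

/-- A function that dominates every function vanishing at `ρ = 0` whose derivative is bounded by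
`|μ'| (N φ + N' E)`. -/
noncomputable def barrier (W : DampedWave) (N N' ρ : ℝ) : ℝ :=
  W.q * N * (W.μ ρ * W.φ ρ) + N' * (W.μ ρ * W.E ρ)

variable {N N' : ℝ}

theorem differentiableAt_barrier (hρ : 0 < ρ) : DifferentiableAt ℝ (W.barrier N N') ρ := by
  have hμ := (W.hasDerivAt_μ hρ).differentiableAt
  exact ((hμ.mul (W.transport_weight.differentiableAt ρ hρ)).const_mul _).add
    ((hμ.mul (W.transport_E.differentiableAt ρ hρ)).const_mul _)

theorem le_deriv_barrier (hN : 0 ≤ N) (hN' : 0 ≤ N') (hρ : 0 < ρ) :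
    |W.μ' ρ| * (N * W.φ ρ + N' * W.E ρ) ≤ deriv (W.barrier N N') ρ := by
  have hμ := (W.hasDerivAt_μ hρ).differentiableAt
  have hφ : HasDerivAt (fun s => W.μ s * W.φ s) (deriv (fun s => W.μ s * W.φ s) ρ) ρ :=
    (hμ.mul (W.transport_weight.differentiableAt ρ hρ)).hasDerivAt
  have hE : HasDerivAt (fun s => W.μ s * W.E s) (deriv (fun s => W.μ s * W.E s) ρ) ρ :=
    (hμ.mul (W.transport_E.differentiableAt ρ hρ)).hasDerivAt
  have hderiv : deriv (W.barrier N N') ρ = _ := ((hφ.const_mul _).add (hE.const_mul _)).deriv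
  have hφle : |W.μ' ρ| * W.φ ρ ≤ W.q * deriv (fun s => W.μ s * W.φ s) ρ :=
    W.transport_weight.abs_deriv_mul_le ρ hρ
  have hEle : |W.μ' ρ| * W.E ρ ≤ 1 * deriv (fun s => W.μ s * W.E s) ρ :=
    W.transport_E.abs_deriv_mul_le ρ hρ
  rw [hderiv]
  nlinarith [mul_le_mul_of_nonneg_left hφle hN, mul_le_mul_of_nonneg_left hEle hN']

theorem tendsto_barrier : Tendsto (W.barrier N N') (𝓝[>] 0) (𝓝 0) := by
  have hE : IsBoundedUnder (· ≤ ·) (𝓝[>] 0) ((‖·‖) ∘ W.E) :=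
    isBoundedUnder_of_eventually_le (a := 1) <| by
      filter_upwards [self_mem_nhdsWithin] with s hs
      simpa [abs_of_pos (W.E_pos hs)] using W.E_le_one s hs
  have hsum := ((W.tendsto_μ.mul W.tendsto_φ).const_mul (W.q * N)).add
    ((W.tendsto_μ.zero_mul_isBoundedUnder_le hE).const_mul N')
  rw [mul_zero, mul_zero, mul_zero, add_zero] at hsum
  exact hsum

theorem abs_le_barrier_of_hasDerivAt {y y' : ℝ → ℝ} (hN : 0 ≤ N) (hN' : 0 ≤ N') (hρ : 0 < ρ)
    (hy : ∀ s ∈ Ioc 0 ρ, HasDerivAt y (y' s) s)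
    (hle : ∀ s ∈ Ioc 0 ρ, |y' s| ≤ |W.μ' s| * (N * W.φ s + N' * W.E s))
    (hy0 : Tendsto y (𝓝[>] 0) (𝓝 0)) : |y ρ| ≤ W.barrier N N' ρ :=
  norm_le_of_norm_deriv_le_of_tendsto_zero hρ hy
    (fun _ hs => (W.differentiableAt_barrier hs.1).hasDerivAt)
    (fun s hs => (hle s hs).trans (W.le_deriv_barrier hN hN' hs.1)) hy0 W.tendsto_barrier

theorem intervalIntegrable_of_abs_le {g : ℝ → ℝ} (hN : 0 ≤ N) (hN' : 0 ≤ N') (hρ : 0 < ρ)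
    (hg : ContinuousOn g (Ioi 0))
    (hle : ∀ s ∈ Ioc 0 ρ, |g s| ≤ |W.μ' s| * (N * W.φ s + N' * W.E s)) :
    IntervalIntegrable g volume 0 ρ :=
  (intervalIntegrable_of_norm_le_deriv hρ
    ((hg.mono Ioc_subset_Ioi_self).aestronglyMeasurable measurableSet_Ioc)
    (fun _ hs => (W.differentiableAt_barrier hs.1).hasDerivAt)
    (fun s hs => (hle s hs).trans (W.le_deriv_barrier hN hN' hs.1)) W.tendsto_barrier).2

theorem abs_integral_le_barrier {g : ℝ → ℝ} (hN : 0 ≤ N) (hN' : 0 ≤ N') (hρ : 0 < ρ)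
    (hg : ContinuousOn g (Ioi 0))
    (hle : ∀ s ∈ Ioc 0 ρ, |g s| ≤ |W.μ' s| * (N * W.φ s + N' * W.E s)) :
    |∫ s in 0..ρ, g s| ≤ W.barrier N N' ρ :=
  norm_integral_le_of_norm_le_deriv hρ
    ((hg.mono Ioc_subset_Ioi_self).aestronglyMeasurable measurableSet_Ioc)
    (fun _ hs => (W.differentiableAt_barrier hs.1).hasDerivAt)
    (fun s hs => (hle s hs).trans (W.le_deriv_barrier hN hN' hs.1)) W.tendsto_barrier

end DampedWave

end DampedWave

section Rigidity

open scoped Topology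

namespace DampedWave

variable (W : DampedWave) {N s ρ : ℝ} {x : ℝ × ℝ}

/-- The characteristic through `x` on which `u + k` is constant. -/
def leftChar (x : ℝ × ℝ) (s : ℝ) : ℝ × ℝ := (s, x.2 + W.k x.1 - W.k s)

/-- The characteristic through `x` on which `u - k` is constant. -/
def rightChar (x : ℝ × ℝ) (s : ℝ) : ℝ × ℝ := (s, x.2 - W.k x.1 + W.k s)

theorem leftChar_self : W.leftChar x x.1 = x := by simp [leftChar]

theorem rightChar_self : W.rightChar x x.1 = x := by simp [rightChar]

theorem hasDerivAt_leftChar_snd (hs : 0 < s) :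
    HasDerivAt (fun t => (W.leftChar x t).2) (-W.c s) s :=
  (W.hasDerivAt_k s hs).const_sub _

theorem hasDerivAt_rightChar_snd (hs : 0 < s) :
    HasDerivAt (fun t => (W.rightChar x t).2) (W.c s) s :=
  (W.hasDerivAt_k s hs).const_add _

/-- `S` is a set of points `(ρ, u)` with `ρ > 0` that contains, with each of its points, the parts
towards `ρ = 0` of the two characteristics through this point. -/
structure IsBackwardInvariant (S : Set (ℝ × ℝ)) : Prop where
  fst_pos : ∀ x ∈ S, 0 < x.1
  leftChar_mem : ∀ x ∈ S, ∀ s ∈ Ioc 0 x.1, W.leftChar x s ∈ S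
  rightChar_mem : ∀ x ∈ S, ∀ s ∈ Ioc 0 x.1, W.rightChar x s ∈ S

/-- Diagonal form of the wave equation on `S`: `μ w` has derivative `μ' z` along characteristics
of the first family, and `μ z` has derivative `μ' w` along those of the second family. -/
structure IsDiagonalSystem (w z : ℝ × ℝ → ℝ) (S : Set (ℝ × ℝ)) : Prop where
  left : ∀ x ∈ S, ∀ s ∈ Ioc 0 x.1,
    HasDerivAt (fun t => W.μ t * w (W.leftChar x t)) (W.μ' s * z (W.leftChar x s)) s
  right : ∀ x ∈ S, ∀ s ∈ Ioc 0 x.1,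
    HasDerivAt (fun t => W.μ t * z (W.rightChar x t)) (W.μ' s * w (W.rightChar x s)) s

theorem abs_le_of_hasDerivAt_μ_mul {y y' : ℝ → ℝ} (hρ : 0 < ρ)
    (hy : ∀ s ∈ Ioc 0 ρ, HasDerivAt (fun t => W.μ t * y t) (W.μ' s * y' s) s)
    (hle : ∀ s ∈ Ioc 0 ρ, |y s| ≤ N * W.φ s) (hle' : ∀ s ∈ Ioc 0 ρ, |y' s| ≤ N * W.φ s) :
    |y ρ| ≤ W.q * N * W.φ ρ := by
  have hN : 0 ≤ N := nonneg_of_mul_nonneg_left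
    ((abs_nonneg _).trans (hle ρ (right_mem_Ioc.2 hρ))) (W.φ_pos hρ)
  have hlim : Tendsto (fun t => W.μ t * y t) (𝓝[>] 0) (𝓝 0) := by
    refine squeeze_zero_norm' ?_
      (by simpa using W.tendsto_μ.mul (W.tendsto_φ.const_mul N) :
        Tendsto (fun t => W.μ t * (N * W.φ t)) (𝓝[>] 0) (𝓝 0))
    filter_upwards [Ioc_mem_nhdsGT hρ] with s hs
    rw [norm_mul, Real.norm_of_nonneg (W.μ_pos hs.1).le]
    exact mul_le_mul_of_nonneg_left (hle s hs) (W.μ_pos hs.1).le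
  have hbound := W.abs_le_barrier_of_hasDerivAt (N' := 0) hN le_rfl hρ hy (fun s hs => by
    rw [abs_mul, zero_mul, add_zero]
    exact mul_le_mul_of_nonneg_left (hle' s hs) (abs_nonneg _)) hlim
  rw [abs_mul, abs_of_pos (W.μ_pos hρ), barrier] at hbound
  exact le_of_mul_le_mul_left (hbound.trans_eq (by ring)) (W.μ_pos hρ)

variable {W} {w z : ℝ × ℝ → ℝ} {S : Set (ℝ × ℝ)}

theorem IsDiagonalSystem.abs_le_q_mul (h : W.IsDiagonalSystem w z S)
    (hS : W.IsBackwardInvariant S) (hw : ∀ x ∈ S, |w x| ≤ N * W.φ x.1)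
    (hz : ∀ x ∈ S, |z x| ≤ N * W.φ x.1) :
    ∀ x ∈ S, |w x| ≤ W.q * N * W.φ x.1 ∧ |z x| ≤ W.q * N * W.φ x.1 := fun x hx => by
  have hleft := W.abs_le_of_hasDerivAt_μ_mul (hS.fst_pos x hx) (h.left x hx)
    (fun s hs => hw _ (hS.leftChar_mem x hx s hs)) (fun s hs => hz _ (hS.leftChar_mem x hx s hs))
  have hright := W.abs_le_of_hasDerivAt_μ_mul (hS.fst_pos x hx) (h.right x hx)
    (fun s hs => hz _ (hS.rightChar_mem x hx s hs)) (fun s hs => hw _ (hS.rightChar_mem x hx s hs))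
  rw [leftChar_self] at hleft
  rw [rightChar_self] at hright
  exact ⟨hleft, hright⟩

theorem IsDiagonalSystem.eq_zero (h : W.IsDiagonalSystem w z S) (hS : W.IsBackwardInvariant S)
    (hw : ∀ x ∈ S, |w x| ≤ N * W.φ x.1) (hz : ∀ x ∈ S, |z x| ≤ N * W.φ x.1) :
    ∀ x ∈ S, w x = 0 ∧ z x = 0 := fun x hx => by
  have hpow (n : ℕ) : ∀ x ∈ S, |w x| ≤ W.q ^ n * N * W.φ x.1 ∧ |z x| ≤ W.q ^ n * N * W.φ x.1 := by
    induction n with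
    | zero =>
      intro y hy
      simpa only [pow_zero, one_mul] using And.intro (hw y hy) (hz y hy)
    | succ n ih =>
      simpa only [pow_succ', mul_assoc] using
        h.abs_le_q_mul hS (fun y hy => (ih y hy).1) (fun y hy => (ih y hy).2)
  have hlim : Tendsto (fun n : ℕ => W.q ^ n * N * W.φ x.1) atTop (𝓝 0) := by
    simpa using ((tendsto_pow_atTop_nhds_zero_of_lt_one W.q_pos.le W.q_lt_one).mul_const
      N).mul_const (W.φ x.1)
  exact ⟨abs_nonpos_iff.1 (ge_of_tendsto' hlim fun n => (hpow n x hx).1),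
    abs_nonpos_iff.1 (ge_of_tendsto' hlim fun n => (hpow n x hx).2)⟩

end DampedWave

end Rigidity

section FixedPoint

open scoped Topology BoundedContinuousFunction

theorem continuousOn_integral_zero_of_dominated {g : ℝ × ℝ → ℝ} (hg : ContinuousOn g halfPlane)
    (hbound : ∀ R K : ℝ, 0 < R → ∃ b : ℝ → ℝ, IntervalIntegrable b volume 0 R ∧
      ∀ s ∈ Ioc 0 R, ∀ c, |c| ≤ K → |g (s, c)| ≤ b s) :
    ContinuousOn (fun x : ℝ × ℝ => ∫ s in (0 : ℝ)..x.1, g (s, x.2)) halfPlane := by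
  rintro ⟨ρ, c⟩ hx
  have hρ : 0 < ρ := mk_mem_halfPlane.1 hx
  have hρ₁ : 0 < ρ + 1 := by linarith
  obtain ⟨b, hb, hgb⟩ := hbound (ρ + 1) (|c| + 1) hρ₁
  rw [intervalIntegrable_iff_integrableOn_Ioc_of_le hρ₁.le] at hb
  have hprim := intervalIntegral.continuousAt_parametric_primitive_of_dominated (μ := volume)
    (F := fun c s => (Ioi 0).indicator (fun s => g (s, c)) s) (fun s => (Ioi 0).indicator b s)
    (-1) (ρ + 1) (a₀ := 0) (b₀ := ρ) (x₀ := c) (fun v => ?_) ?_ ?_ (ae_of_all _ fun s => ?_)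
    ⟨by norm_num, by linarith⟩ ⟨by linarith, by linarith⟩ (by simp)
  · refine ContinuousAt.continuousWithinAt (ContinuousAt.congr
      (hprim.comp (x := (ρ, c)) continuous_swap.continuousAt) ?_)
    filter_upwards [isOpen_halfPlane.mem_nhds hx] with y hy
    refine intervalIntegral.integral_congr_ae (ae_of_all _ fun s hs => ?_)
    rw [uIoc_of_le hy.1.le] at hs
    exact indicator_of_mem (show s ∈ Ioi 0 from hs.1) _
  · have hsection : ContinuousOn (fun s => g (s, v)) (Ioi 0) :=
      hg.comp (by fun_prop) fun s hs => mk_mem_halfPlane.2 hs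
    exact ((aestronglyMeasurable_indicator_iff measurableSet_Ioi).2
      (hsection.aestronglyMeasurable measurableSet_Ioi)).mono_measure Measure.restrict_le_self
  · filter_upwards [continuous_abs.continuousAt.eventually
      (gt_mem_nhds (lt_add_one |c|))] with v hv
    filter_upwards [ae_restrict_mem measurableSet_uIoc] with s hs
    rw [uIoc_of_le (by linarith)] at hs
    by_cases hs0 : s ∈ Ioi (0 : ℝ)
    · simpa only [indicator_of_mem hs0, Real.norm_eq_abs] using hgb s ⟨hs0, hs.2⟩ v hv.le
    · simp only [indicator_of_notMem hs0, norm_zero, le_refl]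
  · rw [intervalIntegrable_iff_integrableOn_Ioc_of_le (by linarith),
      integrableOn_indicator_iff measurableSet_Ioi]
    exact hb.mono_set fun s hs => ⟨hs.1, hs.2.2⟩
  · by_cases hs0 : s ∈ Ioi (0 : ℝ)
    · simp only [indicator_of_mem hs0]
      exact (continuous_section_of_continuousOn_halfPlane hg hs0).continuousAt
    · simpa only [indicator_of_notMem hs0] using continuousAt_const

namespace DampedWave

variable (W : DampedWave)

/-- The value at `ρ = x.1` of the solution `y` of `y' = μ' f`, `y(0) = 0`, along the characteristic
`u = k - x.2`. -/
noncomputable def transport (f : ℝ × ℝ → ℝ) (x : ℝ × ℝ) : ℝ :=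
  ∫ s in (0 : ℝ)..x.1, W.μ' s * f (s, W.k s - x.2)

/-- The functions `f(ρ, u) = |u| + O(φ(ρ))` in which the fixed point of the transport is sought. -/
structure IsNearAbs (C : ℝ) (f : ℝ × ℝ → ℝ) : Prop where
  continuousOn : ContinuousOn f halfPlane
  abs_sub_abs_le : ∀ s, 0 < s → ∀ v, |f (s, v) - (|v|)| ≤ C * W.φ s

namespace IsNearAbs

variable {W} {C ρ s c K : ℝ} {f : ℝ × ℝ → ℝ}

theorem nonneg (h : W.IsNearAbs C f) : 0 ≤ C :=
  nonneg_of_mul_nonneg_left ((abs_nonneg _).trans (h.abs_sub_abs_le 1 one_pos 0))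
    (W.φ_pos one_pos)

theorem continuousOn_integrand (h : W.IsNearAbs C f) :
    ContinuousOn (fun x : ℝ × ℝ => W.μ' x.1 * f (x.1, W.k x.1 - x.2)) halfPlane := by
  have hmaps : MapsTo Prod.fst halfPlane (Ioi (0 : ℝ)) := fun x hx => hx.1
  have hk : ContinuousOn (fun x : ℝ × ℝ => W.k x.1) halfPlane :=
    W.continuousOn_k.comp continuousOn_fst hmaps
  exact (W.continuousOn_μ'.comp continuousOn_fst hmaps).mul
    (h.continuousOn.comp (continuousOn_fst.prodMk (hk.sub continuousOn_snd)) fun x hx =>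
      mk_mem_halfPlane.2 hx.1)

theorem continuousOn_integrand_section (h : W.IsNearAbs C f) (c : ℝ) :
    ContinuousOn (fun s => W.μ' s * f (s, W.k s - c)) (Ioi 0) :=
  h.continuousOn_integrand.comp (f := fun s => (s, c)) (by fun_prop) fun _ hs =>
    mk_mem_halfPlane.2 hs

theorem abs_integrand_le (h : W.IsNearAbs C f) (hs : s ∈ Ioc 0 ρ) (hc : |c| ≤ K) :
    |W.μ' s * f (s, W.k s - c)| ≤
      |W.μ' s| * (C * W.φ s + (W.k ρ + K) * W.M * W.E s) := by
  rw [abs_mul]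
  refine mul_le_mul_of_nonneg_left ?_ (abs_nonneg _)
  have hnear := h.abs_sub_abs_le s hs.1 (W.k s - c)
  have hchar : |W.k s - c| ≤ W.k ρ + K := by
    have := abs_sub (W.k s) c
    rw [abs_of_pos (W.k_pos hs.1)] at this
    linarith [W.k_le hs.1 hs.2]
  have hE := mul_le_mul_of_nonneg_left (W.one_le_M_mul_E s hs.1) ((abs_nonneg _).trans hchar)
  have htriangle := abs_sub_abs_le_abs_sub (f (s, W.k s - c)) |W.k s - c|
  rw [abs_abs] at htriangle
  linarith

theorem intervalIntegrable (h : W.IsNearAbs C f) (hρ : 0 < ρ) (c : ℝ) :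
    IntervalIntegrable (fun s => W.μ' s * f (s, W.k s - c)) volume 0 ρ := by
  have hN' : 0 ≤ (W.k ρ + |c|) * W.M :=
    mul_nonneg (add_nonneg (W.k_pos hρ).le (abs_nonneg c)) W.M_pos.le
  exact W.intervalIntegrable_of_abs_le h.nonneg hN' hρ (h.continuousOn_integrand_section c)
    fun s hs => h.abs_integrand_le hs le_rfl

theorem continuousOn_transport (h : W.IsNearAbs C f) :
    ContinuousOn (W.transport f) halfPlane := by
  refine continuousOn_integral_zero_of_dominated h.continuousOn_integrand fun R K hR => ?_
  have hK : 0 ≤ (W.k R + |K|) * W.M :=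
    mul_nonneg (add_nonneg (W.k_pos hR).le (abs_nonneg K)) W.M_pos.le
  have hcont : ContinuousOn (fun s => |W.μ' s| * (C * W.φ s + (W.k R + |K|) * W.M * W.E s))
      (Ioi 0) := by
    have hE : ContinuousOn W.E (Ioi 0) := fun s hs =>
      (W.transport_E.differentiableAt s hs).continuousAt.continuousWithinAt
    exact W.continuousOn_μ'.abs.mul
      ((continuousOn_const.mul W.continuousOn_φ).add (continuousOn_const.mul hE))
  refine ⟨_, W.intervalIntegrable_of_abs_le h.nonneg hK hR hcont fun s hs => ?_,
    fun s hs c hc => h.abs_integrand_le hs (hc.trans (le_abs_self K))⟩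
  rw [abs_mul, abs_abs, abs_of_nonneg (add_nonneg (mul_nonneg h.nonneg (W.φ_pos hs.1).le)
    (mul_nonneg hK (W.E_pos hs.1).le))]

end IsNearAbs

theorem intervalIntegrable_μ' {ρ : ℝ} (hρ : 0 < ρ) : IntervalIntegrable W.μ' volume 0 ρ :=
  W.intervalIntegrable_of_abs_le le_rfl W.M_pos.le hρ W.continuousOn_μ' fun s hs => by
    rw [zero_mul, zero_add]
    exact le_mul_of_one_le_right (abs_nonneg _) (W.one_le_M_mul_E s hs.1)

theorem integral_μ' {ρ : ℝ} (hρ : 0 < ρ) : ∫ s in (0 : ℝ)..ρ, W.μ' s = W.μ ρ :=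
  integral_eq_of_hasDerivAt_of_tendsto_zero hρ (fun _ hs => W.hasDerivAt_μ hs.1)
    (W.intervalIntegrable_μ' hρ) W.tendsto_μ

namespace IsNearAbs

variable {W} {C ρ : ℝ} {f : ℝ × ℝ → ℝ}

theorem abs_transport_sub_le (h : W.IsNearAbs C f) (hρ : 0 < ρ) (u : ℝ) :
    |W.transport f (ρ, u + W.k ρ) - W.μ ρ * (|u|)| ≤ (W.q * C + W.M) * (W.μ ρ * W.φ ρ) := by
  have hdiff : W.transport f (ρ, u + W.k ρ) - W.μ ρ * |u| =
      ∫ s in (0 : ℝ)..ρ, (W.μ' s * f (s, W.k s - (u + W.k ρ)) - W.μ' s * |u|) := by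
    rw [intervalIntegral.integral_sub (h.intervalIntegrable hρ _)
      ((W.intervalIntegrable_μ' hρ).mul_const _), intervalIntegral.integral_mul_const,
      W.integral_μ' hρ, transport]
  have hbarrier : W.barrier C (W.k ρ * W.M) ρ = (W.q * C + W.M) * (W.μ ρ * W.φ ρ) := by
    rw [barrier, φ]
    ring
  rw [hdiff, ← hbarrier]
  refine W.abs_integral_le_barrier h.nonneg (mul_nonneg (W.k_pos hρ).le W.M_pos.le) hρ
    ((h.continuousOn_integrand_section _).sub (W.continuousOn_μ'.mul continuousOn_const))
    fun s hs => ?_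
  rw [← mul_sub, abs_mul]
  refine mul_le_mul_of_nonneg_left ?_ (abs_nonneg _)
  have hnear := h.abs_sub_abs_le s hs.1 (W.k s - (u + W.k ρ))
  have hshift : |(|W.k s - (u + W.k ρ)| - |u|)| ≤ W.k ρ := by
    refine (abs_neg u ▸ abs_abs_sub_abs_le (W.k s - (u + W.k ρ)) (-u)).trans ?_
    rw [abs_le]
    constructor <;> linarith [W.k_pos hs.1, W.k_le hs.1 hs.2]
  have hE := mul_le_mul_of_nonneg_left (W.one_le_M_mul_E s hs.1) (W.k_pos hρ).le
  linarith [abs_sub_le (f (s, W.k s - (u + W.k ρ))) |W.k s - (u + W.k ρ)| |u|]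

theorem abs_transport_sub_transport_le {C' D : ℝ} {g : ℝ × ℝ → ℝ} (hf : W.IsNearAbs C f)
    (hg : W.IsNearAbs C' g) (hD : 0 ≤ D)
    (hle : ∀ s, 0 < s → ∀ v, |f (s, v) - g (s, v)| ≤ D * W.φ s) (hρ : 0 < ρ) (c : ℝ) :
    |W.transport f (ρ, c) - W.transport g (ρ, c)| ≤ W.q * D * (W.μ ρ * W.φ ρ) := by
  have hbarrier : W.barrier D 0 ρ = W.q * D * (W.μ ρ * W.φ ρ) := by
    rw [barrier, zero_mul, add_zero]
  rw [transport, transport, ← intervalIntegral.integral_sub (hf.intervalIntegrable hρ _)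
    (hg.intervalIntegrable hρ _), ← hbarrier]
  refine W.abs_integral_le_barrier hD le_rfl hρ
    ((hf.continuousOn_integrand_section _).sub (hg.continuousOn_integrand_section _))
    fun s hs => ?_
  rw [← mul_sub, abs_mul, zero_mul, add_zero]
  exact mul_le_mul_of_nonneg_left (hle s hs.1 _) (abs_nonneg _)

end IsNearAbs

/-- The function `|u| + φ(ρ) g` with the correction `g`, a function of `(log ρ, u)` so that it is
bounded and continuous on a whole plane. -/
noncomputable def perturbedAbs (g : ℝ × ℝ →ᵇ ℝ) (x : ℝ × ℝ) : ℝ :=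
  |x.2| + W.φ x.1 * g (Real.log x.1, x.2)

theorem isNearAbs_perturbedAbs (g : ℝ × ℝ →ᵇ ℝ) : W.IsNearAbs ‖g‖ (W.perturbedAbs g) where
  continuousOn := by
    have hlog : ContinuousOn (fun x : ℝ × ℝ => (Real.log x.1, x.2)) halfPlane :=
      (continuousOn_fst.log fun x hx => (ne_of_gt hx.1)).prodMk continuousOn_snd
    exact continuousOn_snd.abs.add ((W.continuousOn_φ.comp continuousOn_fst fun x hx => hx.1).mul
      (g.continuous.comp_continuousOn hlog))
  abs_sub_abs_le s hs v := by
    rw [perturbedAbs, add_sub_cancel_left, abs_mul, abs_of_pos (W.φ_pos hs), mul_comm]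
    exact mul_le_mul_of_nonneg_right (g.norm_coe_le_norm _) (W.φ_pos hs).le

/-- The correction, as a function of `(log ρ, u)`, of the transported function `|u| + φ g`. -/
noncomputable def transportCorrection (g : ℝ × ℝ →ᵇ ℝ) (y : ℝ × ℝ) : ℝ :=
  (W.transport (W.perturbedAbs g) (Real.exp y.1, y.2 + W.k (Real.exp y.1))
    - W.μ (Real.exp y.1) * |y.2|) / (W.μ (Real.exp y.1) * W.φ (Real.exp y.1))

theorem μ_mul_φ_pos {ρ : ℝ} (hρ : 0 < ρ) : 0 < W.μ ρ * W.φ ρ := mul_pos (W.μ_pos hρ) (W.φ_pos hρ)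

theorem continuous_transportCorrection (g : ℝ × ℝ →ᵇ ℝ) :
    Continuous (W.transportCorrection g) := by
  have hexp : Continuous fun y : ℝ × ℝ => Real.exp y.1 := by fun_prop
  have hcomp {h : ℝ → ℝ} (hh : ContinuousOn h (Ioi 0)) :
      Continuous fun y : ℝ × ℝ => h (Real.exp y.1) :=
    hh.comp_continuous hexp fun y => Real.exp_pos y.1
  have hμ := hcomp W.contDiffOn_μ.continuousOn
  have htransport := (W.isNearAbs_perturbedAbs g).continuousOn_transport.comp_continuous
    (hexp.prodMk (continuous_snd.add (hcomp W.continuousOn_k)))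
    fun y => mk_mem_halfPlane.2 (Real.exp_pos y.1)
  exact (htransport.sub (hμ.mul continuous_snd.abs)).div (hμ.mul (hcomp W.continuousOn_φ))
    fun y => (W.μ_mul_φ_pos (Real.exp_pos y.1)).ne'

theorem norm_transportCorrection_le (g : ℝ × ℝ →ᵇ ℝ) (y : ℝ × ℝ) :
    ‖W.transportCorrection g y‖ ≤ W.q * ‖g‖ + W.M := by
  have hpos := W.μ_mul_φ_pos (Real.exp_pos y.1)
  rw [transportCorrection, Real.norm_eq_abs, abs_div, abs_of_pos hpos, div_le_iff₀ hpos]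
  exact (W.isNearAbs_perturbedAbs g).abs_transport_sub_le (Real.exp_pos y.1) y.2

/-- Transport along characteristics, acting on corrections. -/
noncomputable def transportMap (g : ℝ × ℝ →ᵇ ℝ) : ℝ × ℝ →ᵇ ℝ :=
  .ofNormedAddCommGroup (W.transportCorrection g) (W.continuous_transportCorrection g)
    (W.q * ‖g‖ + W.M) (W.norm_transportCorrection_le g)

theorem contractingWith_transportMap : ContractingWith W.q.toNNReal W.transportMap := by
  refine ⟨Real.toNNReal_lt_one.2 W.q_lt_one, LipschitzWith.of_dist_le_mul fun g g' => ?_⟩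
  rw [Real.coe_toNNReal _ W.q_pos.le,
    BoundedContinuousFunction.dist_le (mul_nonneg W.q_pos.le dist_nonneg)]
  intro y
  have hdist (s : ℝ) (hs : 0 < s) (v : ℝ) :
      |W.perturbedAbs g (s, v) - W.perturbedAbs g' (s, v)| ≤ dist g g' * W.φ s := by
    rw [perturbedAbs, perturbedAbs, add_sub_add_left_eq_sub, ← mul_sub, abs_mul,
      abs_of_pos (W.φ_pos hs), mul_comm]
    exact mul_le_mul_of_nonneg_right
      (BoundedContinuousFunction.dist_coe_le_dist (f := g) (g := g') _) (W.φ_pos hs).le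
  have hpos := W.μ_mul_φ_pos (Real.exp_pos y.1)
  change |W.transportCorrection g y - W.transportCorrection g' y| ≤ W.q * dist g g'
  rw [transportCorrection, transportCorrection, ← sub_div, sub_sub_sub_cancel_right, abs_div,
    abs_of_pos hpos, div_le_iff₀ hpos]
  exact (W.isNearAbs_perturbedAbs g).abs_transport_sub_transport_le (W.isNearAbs_perturbedAbs g')
    dist_nonneg hdist (Real.exp_pos y.1) _

/-- The fixed points of the transport, `μ(ρ) f(ρ, c - k(ρ)) = ∫₀^ρ μ'(s) f(s, k(s) - c) ds`. For
such `f`, the function `(w, z) = (f(ρ, u), f(ρ, -u))` solves the diagonal system. -/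
structure IsTransportFixedPoint (C : ℝ) (f : ℝ × ℝ → ℝ) : Prop extends W.IsNearAbs C f where
  μ_mul_eq : ∀ ρ, 0 < ρ → ∀ c, W.μ ρ * f (ρ, c - W.k ρ) = W.transport f (ρ, c)

theorem exists_isTransportFixedPoint : ∃ C f, W.IsTransportFixedPoint C f := by
  obtain ⟨g, hg⟩ : ∃ g, W.transportMap g = g :=
    ⟨_, W.contractingWith_transportMap.fixedPoint_isFixedPt⟩
  refine ⟨‖g‖, W.perturbedAbs g, W.isNearAbs_perturbedAbs g, fun ρ hρ c => ?_⟩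
  have heq : g (Real.log ρ, c - W.k ρ) = W.transportCorrection g (Real.log ρ, c - W.k ρ) :=
    (DFunLike.congr_fun hg _).symm
  have hμ := (W.μ_pos hρ).ne'
  have hφ := (W.φ_pos hρ).ne'
  rw [transportCorrection, Real.exp_log hρ, sub_add_cancel] at heq
  rw [perturbedAbs, heq]
  field_simp
  ring

theorem hasDerivAt_μ_mul_sub_k_add {s : ℝ} (hs : 0 < s) (a σ : ℝ) :
    HasDerivAt (fun t => W.μ t * (a - σ * W.k t + σ * t * W.c t))
      (W.μ' s * (a - σ * W.k s - σ * s * W.c s)) s := by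
  have hlinear := (((W.hasDerivAt_k s hs).const_mul σ).const_sub a).add
    (((hasDerivAt_id s).const_mul σ).mul (W.hasDerivAt_c hs))
  refine ((W.hasDerivAt_μ hs).mul hlinear).congr_deriv ?_
  simp only [id, Pi.add_apply, Pi.mul_apply]
  linear_combination σ * s * W.two_mul_μ'_mul_c hs

theorem isBackwardInvariant_outer : W.IsBackwardInvariant {x | 0 < x.1 ∧ W.k x.1 ≤ x.2} where
  fst_pos _ hx := hx.1
  leftChar_mem x hx s hs := ⟨hs.1, show W.k s ≤ x.2 + W.k x.1 - W.k s by
    linarith [hx.2, W.k_le hs.1 hs.2]⟩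
  rightChar_mem x hx s hs := ⟨hs.1, show W.k s ≤ x.2 - W.k x.1 + W.k s by linarith [hx.2]⟩

namespace IsTransportFixedPoint

variable {W} {C ρ s : ℝ} {f : ℝ × ℝ → ℝ}

theorem hasDerivAt (h : W.IsTransportFixedPoint C f) (hs : 0 < s) (c : ℝ) :
    HasDerivAt (fun t => W.μ t * f (t, c - W.k t)) (W.μ' s * f (s, W.k s - c)) s := by
  have hcont := h.continuousOn_integrand_section c
  refine (intervalIntegral.integral_hasDerivAt_right (h.intervalIntegrable hs c)
    (hcont.stronglyMeasurableAtFilter isOpen_Ioi s hs)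
    (hcont.continuousAt (Ioi_mem_nhds hs))).congr_of_eventuallyEq ?_
  filter_upwards [Ioi_mem_nhds hs] with t ht using h.μ_mul_eq t ht c

theorem isDiagonalSystem_outer (h : W.IsTransportFixedPoint C f) :
    W.IsDiagonalSystem (fun x => f x - (x.2 + x.1 * W.c x.1))
      (fun x => f (x.1, -x.2) - (x.2 - x.1 * W.c x.1)) {x | 0 < x.1 ∧ W.k x.1 ≤ x.2} where
  left x _ s hs := by
    have hsub := (h.hasDerivAt hs.1 (x.2 + W.k x.1)).sub
      (W.hasDerivAt_μ_mul_sub_k_add hs.1 (x.2 + W.k x.1) 1)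
    refine (hsub.congr_of_eventuallyEq (.of_eq (funext fun t => ?_))).congr_deriv ?_
    · simp only [leftChar, Pi.sub_apply]
      ring
    · simp only [leftChar, neg_sub]
      ring
  right x _ s hs := by
    have hsub := (h.hasDerivAt hs.1 (W.k x.1 - x.2)).sub
      (W.hasDerivAt_μ_mul_sub_k_add hs.1 (x.2 - W.k x.1) (-1))
    refine (hsub.congr_of_eventuallyEq (.of_eq (funext fun t => ?_))).congr_deriv ?_
    · simp only [rightChar, Pi.sub_apply, show -(x.2 - W.k x.1 + W.k t) = W.k x.1 - x.2 - W.k t by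
        ring]
      ring
    · simp only [rightChar, show x.2 - W.k x.1 + W.k s = W.k s - (W.k x.1 - x.2) by ring]
      ring

theorem eq_of_k_le (h : W.IsTransportFixedPoint C f) {u : ℝ} (hρ : 0 < ρ) (hu : W.k ρ ≤ u) :
    f (ρ, u) = u + ρ * W.c ρ ∧ f (ρ, -u) = u - ρ * W.c ρ := by
  have hbound {t v σ : ℝ} (ht : 0 < t) (hσ : |σ| = 1) :
      |f (t, v) - (|v| + σ * (t * W.c t))| ≤ (C + W.M * W.M) * W.φ t := by
    have hc : |σ * (t * W.c t)| ≤ W.M * (W.M * W.φ t) := by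
      rw [abs_mul, hσ, one_mul, abs_of_pos (mul_pos ht (W.c_pos t ht))]
      exact (W.mul_c_le t ht).trans (mul_le_mul_of_nonneg_left (W.k_le_M_mul_φ ht) W.M_pos.le)
    rw [← sub_sub]
    exact (abs_sub _ _).trans (by linarith [h.abs_sub_abs_le t ht v])
  have hzero := h.isDiagonalSystem_outer.eq_zero W.isBackwardInvariant_outer
    (N := C + W.M * W.M) (fun x hx => ?_) (fun x hx => ?_) (ρ, u) ⟨hρ, hu⟩
  · exact ⟨sub_eq_zero.1 hzero.1, sub_eq_zero.1 hzero.2⟩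
  · simpa [abs_of_pos ((W.k_pos hx.1).trans_le hx.2)] using
      hbound (v := x.2) hx.1 (abs_one (α := ℝ))
  · simpa [abs_of_pos ((W.k_pos hx.1).trans_le hx.2), sub_eq_add_neg] using
      hbound (v := -x.2) (σ := -1) hx.1 (by simp)

end IsTransportFixedPoint

end DampedWave

end FixedPoint

section Entropy

open scoped Topology

/-- The even part in `u` of a function of `(ρ, u)`. -/
noncomputable def evenPart (f : ℝ × ℝ → ℝ) (x : ℝ × ℝ) : ℝ := (f x + f (x.1, -x.2)) / 2

/-- The odd part in `u` of a function of `(ρ, u)`. -/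
noncomputable def oddPart (f : ℝ × ℝ → ℝ) (x : ℝ × ℝ) : ℝ := (f x - f (x.1, -x.2)) / 2

/-- The function with mixed second derivative `evenPart f` that vanishes for `u = 0`, and for
`ρ = 0`. -/
noncomputable def entropy (f : ℝ × ℝ → ℝ) (x : ℝ × ℝ) : ℝ :=
  ∫ v in (0 : ℝ)..x.2, ∫ s in (0 : ℝ)..x.1, evenPart f (s, v)

/-- The derivative `∂/∂ρ` of `entropy f`. -/
noncomputable def entropyFst (f : ℝ × ℝ → ℝ) (x : ℝ × ℝ) : ℝ :=
  ∫ v in (0 : ℝ)..x.2, evenPart f (x.1, v)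

/-- The derivative `∂/∂u` of `entropy f`. -/
noncomputable def entropySnd (f : ℝ × ℝ → ℝ) (x : ℝ × ℝ) : ℝ :=
  ∫ s in (0 : ℝ)..x.1, evenPart f (s, x.2)

theorem evenPart_neg (f : ℝ × ℝ → ℝ) (ρ u : ℝ) : evenPart f (ρ, -u) = evenPart f (ρ, u) := by
  simp only [evenPart, neg_neg, add_comm]

theorem entropy_neg (f : ℝ × ℝ → ℝ) (ρ u : ℝ) : entropy f (ρ, -u) = -entropy f (ρ, u) := by
  have hreflect := intervalIntegral.integral_comp_neg
    (fun v => ∫ s in (0 : ℝ)..ρ, evenPart f (s, v)) (a := 0) (b := u)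
  simp only [evenPart_neg, neg_zero] at hreflect
  simp only [entropy, hreflect, ← intervalIntegral.integral_symm]

theorem abs_le_of_mem_uIoc_zero {u v : ℝ} (hv : v ∈ uIoc 0 u) : |v| ≤ |u| := by
  simpa using abs_sub_left_of_mem_uIcc (uIoc_subset_uIcc hv)

theorem abs_integral_zero_le {g : ℝ → ℝ} {u K : ℝ} (hg : ∀ v ∈ uIoc 0 u, |g v| ≤ K) :
    |∫ v in (0 : ℝ)..u, g v| ≤ |u| * K := by
  simpa [mul_comm] using intervalIntegral.norm_integral_le_of_norm_le_const (f := g) hg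

theorem integral_abs_zero_of_nonneg {u : ℝ} (hu : 0 ≤ u) :
    ∫ v in (0 : ℝ)..u, |v| = u ^ 2 / 2 := by
  rw [intervalIntegral.integral_congr (g := id) fun v hv => ?_]
  · simp
  · rw [uIcc_of_le hu] at hv
    exact abs_of_nonneg hv.1

namespace DampedWave

variable {W : DampedWave} {C ρ s u : ℝ} {f : ℝ × ℝ → ℝ}

namespace IsNearAbs

theorem continuousOn_comp_neg (h : W.IsNearAbs C f) :
    ContinuousOn (fun x : ℝ × ℝ => f (x.1, -x.2)) halfPlane :=
  h.continuousOn.comp (by fun_prop) fun x hx => mk_mem_halfPlane.2 hx.1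

theorem continuousOn_evenPart (h : W.IsNearAbs C f) : ContinuousOn (evenPart f) halfPlane :=
  (h.continuousOn.add h.continuousOn_comp_neg).div_const 2

theorem continuousOn_oddPart (h : W.IsNearAbs C f) : ContinuousOn (oddPart f) halfPlane :=
  (h.continuousOn.sub h.continuousOn_comp_neg).div_const 2

theorem abs_evenPart_sub_abs_le (h : W.IsNearAbs C f) (hs : 0 < s) :
    |evenPart f (s, u) - (|u|)| ≤ C * W.φ s := by
  have hpos := abs_le.1 (h.abs_sub_abs_le s hs u)
  have hneg := abs_le.1 (h.abs_sub_abs_le s hs (-u))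
  rw [abs_neg] at hneg
  rw [evenPart, abs_le]
  constructor <;> linarith

theorem abs_oddPart_le (h : W.IsNearAbs C f) (hs : 0 < s) : |oddPart f (s, u)| ≤ C * W.φ s := by
  have hpos := abs_le.1 (h.abs_sub_abs_le s hs u)
  have hneg := abs_le.1 (h.abs_sub_abs_le s hs (-u))
  rw [abs_neg] at hneg
  rw [oddPart, abs_le]
  constructor <;> linarith

theorem abs_evenPart_le (h : W.IsNearAbs C f) (hs : s ∈ Ioc 0 ρ) :
    |evenPart f (s, u)| ≤ |u| + C * W.k ρ := by
  have hφ := mul_le_mul_of_nonneg_left ((W.φ_le_k hs.1).trans (W.k_le hs.1 hs.2)) h.nonneg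
  have htriangle := abs_sub_abs_le_abs_sub (evenPart f (s, u)) |u|
  rw [abs_abs] at htriangle
  linarith [h.abs_evenPart_sub_abs_le (u := u) hs.1]

theorem abs_entropyFst_le (h : W.IsNearAbs C f) (hρ : 0 < ρ) :
    |entropyFst f (ρ, u)| ≤ |u| * (|u| + C * W.k ρ) :=
  abs_integral_zero_le fun _ hv => (h.abs_evenPart_le ⟨hρ, le_rfl⟩).trans
    (add_le_add_left (abs_le_of_mem_uIoc_zero hv) _)

theorem abs_entropySnd_le (h : W.IsNearAbs C f) (hρ : 0 < ρ) :
    |entropySnd f (ρ, u)| ≤ ρ * (|u| + C * W.k ρ) :=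
  (abs_integral_zero_le fun s hs => h.abs_evenPart_le (uIoc_of_le hρ.le ▸ hs)).trans_eq
    (by rw [abs_of_pos hρ])

theorem abs_entropy_le (h : W.IsNearAbs C f) (hρ : 0 < ρ) :
    |entropy f (ρ, u)| ≤ |u| * (ρ * (|u| + C * W.k ρ)) :=
  abs_integral_zero_le fun _ hv => (h.abs_entropySnd_le hρ).trans
    (mul_le_mul_of_nonneg_left (add_le_add_left (abs_le_of_mem_uIoc_zero hv) _) hρ.le)

theorem abs_entropyFst_sub_le (h : W.IsNearAbs C f) (hρ : 0 < ρ) (hu : 0 ≤ u) :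
    |entropyFst f (ρ, u) - u ^ 2 / 2| ≤ u * (C * W.φ ρ) := by
  rw [entropyFst, ← integral_abs_zero_of_nonneg hu, ← intervalIntegral.integral_sub
    ((continuous_section_of_continuousOn_halfPlane h.continuousOn_evenPart hρ).intervalIntegrable
      _ _) (continuous_abs.intervalIntegrable _ _)]
  exact (abs_integral_zero_le fun v _ => h.abs_evenPart_sub_abs_le hρ).trans_eq
    (by rw [abs_of_nonneg hu])

theorem continuousOn_evenPart_section (h : W.IsNearAbs C f) (u : ℝ) :
    ContinuousOn (fun s => evenPart f (s, u)) (Ioi 0) :=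
  h.continuousOn_evenPart.comp (f := fun s => (s, u)) (by fun_prop) fun _ hs =>
    mk_mem_halfPlane.2 hs

theorem intervalIntegrable_evenPart (h : W.IsNearAbs C f) (hρ : 0 < ρ) :
    IntervalIntegrable (fun s => evenPart f (s, u)) volume 0 ρ := by
  refine (intervalIntegrable_const (c := |u| + C * W.k ρ)).mono_fun' ?_ ?_ <;>
    rw [uIoc_of_le hρ.le]
  · exact ((h.continuousOn_evenPart_section u).mono Ioc_subset_Ioi_self).aestronglyMeasurable
      measurableSet_Ioc
  · filter_upwards [ae_restrict_mem measurableSet_Ioc] with s hs using h.abs_evenPart_le hs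

theorem hasDerivAt_entropySnd_fst (h : W.IsNearAbs C f) (hρ : 0 < ρ) :
    HasDerivAt (fun s => entropySnd f (s, u)) (evenPart f (ρ, u)) ρ :=
  intervalIntegral.integral_hasDerivAt_right (h.intervalIntegrable_evenPart hρ)
    ((h.continuousOn_evenPart_section u).stronglyMeasurableAtFilter isOpen_Ioi ρ hρ)
    ((h.continuousOn_evenPart_section u).continuousAt (Ioi_mem_nhds hρ))

theorem hasDerivAt_entropyFst_snd (h : W.IsNearAbs C f) (hρ : 0 < ρ) :
    HasDerivAt (fun v => entropyFst f (ρ, v)) (evenPart f (ρ, u)) u :=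
  ((continuous_section_of_continuousOn_halfPlane h.continuousOn_evenPart
    hρ).integral_hasStrictDerivAt 0 u).hasDerivAt

theorem entropyFst_eq (h : W.IsNearAbs C f) (hρ : 0 < ρ) : entropyFst f (ρ, u) =
    ((∫ v in (0 : ℝ)..u, f (ρ, v)) - ∫ v in (0 : ℝ)..-u, f (ρ, v)) / 2 := by
  have hf := continuous_section_of_continuousOn_halfPlane h.continuousOn hρ
  have hf_neg : Continuous fun v => f (ρ, -v) := hf.comp continuous_neg
  have hreflect := intervalIntegral.integral_comp_neg (fun v => f (ρ, v)) (a := 0) (b := u)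
  rw [neg_zero, intervalIntegral.integral_symm 0 (-u)] at hreflect
  simp only [entropyFst, evenPart]
  rw [intervalIntegral.integral_div, intervalIntegral.integral_add (hf.intervalIntegrable _ _)
    (hf_neg.intervalIntegrable _ _), hreflect, sub_eq_add_neg]

theorem integral_oddPart_eq (h : W.IsNearAbs C f) (hρ : 0 < ρ) :
    ∫ v in (0 : ℝ)..u, oddPart f (ρ, v) =
      ((∫ v in (0 : ℝ)..u, f (ρ, v)) + ∫ v in (0 : ℝ)..-u, f (ρ, v)) / 2 := by
  have hf := continuous_section_of_continuousOn_halfPlane h.continuousOn hρ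
  have hf_neg : Continuous fun v => f (ρ, -v) := hf.comp continuous_neg
  have hreflect := intervalIntegral.integral_comp_neg (fun v => f (ρ, v)) (a := 0) (b := u)
  rw [neg_zero, intervalIntegral.integral_symm 0 (-u)] at hreflect
  simp only [oddPart]
  rw [intervalIntegral.integral_div, intervalIntegral.integral_sub (hf.intervalIntegrable _ _)
    (hf_neg.intervalIntegrable _ _), hreflect, sub_neg_eq_add]

end IsNearAbs

namespace IsTransportFixedPoint

theorem hasDerivAt_μ_mul_integral (h : W.IsTransportFixedPoint C f) (hρ : 0 < ρ) (b : ℝ) :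
    HasDerivAt (fun s => W.μ s * ∫ v in (0 : ℝ)..b, f (s, v))
      (-(W.μ' ρ * ∫ v in (0 : ℝ)..-b, f (ρ, v)) + W.μ ρ * W.c ρ * (f (ρ, b) - f (ρ, 0))) ρ := by
  have hmaps : MapsTo Prod.fst halfPlane (Ioi (0 : ℝ)) := fun x hx => hx.1
  have hk : ContinuousOn (fun x : ℝ × ℝ => W.k x.1) halfPlane :=
    W.continuousOn_k.comp continuousOn_fst hmaps
  have hX : ContinuousOn (fun x : ℝ × ℝ => W.μ x.1 * f (x.1, x.2 - W.k x.1)) halfPlane :=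
    (W.contDiffOn_μ.continuousOn.comp continuousOn_fst hmaps).mul
      (h.continuousOn.comp (continuousOn_fst.prodMk (continuousOn_snd.sub hk)) fun x hx =>
        mk_mem_halfPlane.2 hx.1)
  have hmoving := hasDerivAt_integral_moving_endpoints hX h.continuousOn_integrand
    (fun s hs v => h.hasDerivAt hs v) hρ (W.hasDerivAt_k ρ hρ) ((W.hasDerivAt_k ρ hρ).const_add b)
  refine (hmoving.congr_of_eventuallyEq (.of_eq (funext fun s => ?_))).congr_deriv ?_
  · have hshift := intervalIntegral.integral_comp_sub_right (fun v => f (s, v)) (a := W.k s)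
      (b := b + W.k s) (W.k s)
    rw [sub_self, add_sub_cancel_right] at hshift
    simp only [intervalIntegral.integral_const_mul, hshift]
  · have hreflect := intervalIntegral.integral_comp_sub_left (fun v => f (ρ, v)) (a := W.k ρ)
      (b := b + W.k ρ) (W.k ρ)
    rw [sub_self, sub_add_cancel_right, intervalIntegral.integral_symm 0 (-b)] at hreflect
    simp only [intervalIntegral.integral_const_mul, hreflect, sub_self, add_sub_cancel_right]
    ring

theorem hasDerivAt_entropyFst_fst (h : W.IsTransportFixedPoint C f) (hρ : 0 < ρ) :
    HasDerivAt (fun s => entropyFst f (s, u)) (W.c ρ * oddPart f (ρ, u)) ρ := by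
  have hquot := (((h.hasDerivAt_μ_mul_integral hρ u).sub
    (h.hasDerivAt_μ_mul_integral hρ (-u))).div (W.hasDerivAt_μ hρ) (W.μ_pos hρ).ne').div_const 2
  refine (hquot.congr_of_eventuallyEq ?_).congr_deriv ?_
  · filter_upwards [Ioi_mem_nhds hρ] with s hs
    have hμ := (W.μ_pos hs).ne'
    simp only [h.entropyFst_eq hs, Pi.sub_apply, Pi.div_apply]
    field_simp
  · have hμ := (W.μ_pos hρ).ne'
    simp only [Pi.sub_apply, neg_neg, oddPart]
    field_simp
    ring

theorem hasDerivAt_μ_sq_mul_integral_oddPart (h : W.IsTransportFixedPoint C f) (hρ : 0 < ρ) :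
    HasDerivAt (fun s => W.μ s ^ 2 * ∫ v in (0 : ℝ)..u, oddPart f (s, v))
      (evenPart f (ρ, u) - evenPart f (ρ, 0)) ρ := by
  have hprod := ((W.hasDerivAt_μ hρ).mul ((h.hasDerivAt_μ_mul_integral hρ u).add
    (h.hasDerivAt_μ_mul_integral hρ (-u)))).div_const 2
  refine (hprod.congr_of_eventuallyEq ?_).congr_deriv ?_
  · filter_upwards [Ioi_mem_nhds hρ] with s hs
    simp only [h.integral_oddPart_eq hs, Pi.add_apply, Pi.mul_apply]
    ring
  · simp only [Pi.add_apply, neg_neg, neg_zero, evenPart]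
    linear_combination (f (ρ, u) + f (ρ, -u) - 2 * f (ρ, 0)) / 2 * W.μ_sq_mul_c hρ

theorem tendsto_μ_sq_mul_integral_oddPart (h : W.IsNearAbs C f) :
    Tendsto (fun s => W.μ s ^ 2 * ∫ v in (0 : ℝ)..u, oddPart f (s, v)) (𝓝[>] 0) (𝓝 0) := by
  have hlim : Tendsto (fun s => W.μ s ^ 2 * (|u| * (C * W.φ s))) (𝓝[>] 0) (𝓝 0) := by
    simpa using (W.tendsto_μ.pow 2).mul ((W.tendsto_φ.const_mul C).const_mul |u|)
  refine squeeze_zero_norm' ?_ hlim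
  filter_upwards [self_mem_nhdsWithin] with s hs
  rw [norm_mul, Real.norm_of_nonneg (sq_nonneg _)]
  exact mul_le_mul_of_nonneg_left (abs_integral_zero_le fun v _ => h.abs_oddPart_le hs)
    (sq_nonneg _)

theorem entropySnd_eq (h : W.IsTransportFixedPoint C f) (hρ : 0 < ρ) :
    entropySnd f (ρ, u) =
      entropySnd f (ρ, 0) + W.μ ρ ^ 2 * ∫ v in (0 : ℝ)..u, oddPart f (ρ, v) := by
  rw [← sub_eq_iff_eq_add', entropySnd, entropySnd, ← intervalIntegral.integral_sub
    (h.intervalIntegrable_evenPart hρ) (h.intervalIntegrable_evenPart hρ)]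
  exact integral_eq_of_hasDerivAt_of_tendsto_zero hρ
    (fun s hs => h.hasDerivAt_μ_sq_mul_integral_oddPart hs.1)
    ((h.intervalIntegrable_evenPart hρ).sub (h.intervalIntegrable_evenPart hρ))
    (tendsto_μ_sq_mul_integral_oddPart h.toIsNearAbs)

theorem hasDerivAt_entropySnd_snd (h : W.IsTransportFixedPoint C f) (hρ : 0 < ρ) :
    HasDerivAt (fun v => entropySnd f (ρ, v)) (W.μ ρ ^ 2 * oddPart f (ρ, u)) u := by
  have hodd := continuous_section_of_continuousOn_halfPlane h.continuousOn_oddPart hρ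
  exact ((((hodd.integral_hasStrictDerivAt 0 u).hasDerivAt).const_mul _).const_add
    _).congr_of_eventuallyEq (.of_eq (funext fun v => h.entropySnd_eq hρ))

theorem hasSecondPartialsOn_entropy (h : W.IsTransportFixedPoint C f) :
    HasSecondPartialsOn (entropy f) (entropyFst f) (entropySnd f)
      (fun x => W.c x.1 * oddPart f x) (evenPart f) (fun x => W.μ x.1 ^ 2 * oddPart f x)
      halfPlane := by
  have hmaps : MapsTo Prod.fst halfPlane (Ioi (0 : ℝ)) := fun x hx => hx.1
  have hfst : HasPartialsOn (entropyFst f) (fun x => W.c x.1 * oddPart f x) (evenPart f)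
      halfPlane :=
    ⟨fun x hx => h.hasDerivAt_entropyFst_fst hx.1, fun x hx => h.hasDerivAt_entropyFst_snd hx.1,
      (W.contDiffOn_c.continuousOn.comp continuousOn_fst hmaps).mul h.continuousOn_oddPart,
      h.continuousOn_evenPart⟩
  have hsnd : HasPartialsOn (entropySnd f) (evenPart f) (fun x => W.μ x.1 ^ 2 * oddPart f x)
      halfPlane :=
    ⟨fun x hx => h.hasDerivAt_entropySnd_fst hx.1, fun x hx => h.hasDerivAt_entropySnd_snd hx.1,
      h.continuousOn_evenPart, ((W.contDiffOn_μ.continuousOn.comp continuousOn_fst hmaps).pow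
        2).mul h.continuousOn_oddPart⟩
  have hcontSnd := hsnd.continuousOn isOpen_halfPlane
  refine ⟨⟨fun x hx => ?_, fun x hx => ?_, hfst.continuousOn isOpen_halfPlane, hcontSnd⟩, hfst,
    hsnd⟩
  · exact (hasDerivAt_integral_zero_moving_endpoint hcontSnd h.continuousOn_evenPart
      (fun s hs v => h.hasDerivAt_entropySnd_fst hs) hx.1
      (hasDerivAt_const x.1 x.2)).congr_deriv (by simp [entropyFst])
  · exact ((continuous_section_of_continuousOn_halfPlane hcontSnd hx.1).integral_hasStrictDerivAt
      0 x.2).hasDerivAt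

theorem oddPart_of_k_le (h : W.IsTransportFixedPoint C f) (hρ : 0 < ρ) (hu : W.k ρ ≤ u) :
    oddPart f (ρ, u) = ρ * W.c ρ := by
  simp only [oddPart, h.eq_of_k_le hρ hu]
  ring

end IsTransportFixedPoint

end DampedWave

end Entropy

section Goursat

open scoped Topology

/-- Growth of an entropy `η` and of its first derivatives `p = η_ρ` and `r = η_u` on the half plane
`ρ > 0`, measured by the speed profile `h`. -/
structure HasEntropyGrowth (C : ℝ) (h : ℝ → ℝ) (η p r : ℝ × ℝ → ℝ) : Prop where
  pos : 0 < C
  abs_le : ∀ ρ, 0 < ρ → ∀ u, |η (ρ, u)| ≤ C * (ρ * (u ^ 2 + h ρ ^ 2))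
  abs_fst_le : ∀ ρ, 0 < ρ → ∀ u, |p (ρ, u)| ≤ C * (u ^ 2 + h ρ ^ 2)
  abs_snd_le : ∀ ρ, 0 < ρ → ∀ u, |r (ρ, u)| ≤ C * (ρ * (|u| + h ρ))

theorem HasEntropyGrowth.mono {C K : ℝ} {h h' : ℝ → ℝ} {η p r : ℝ × ℝ → ℝ}
    (hη : HasEntropyGrowth C h η p r) (hh : ∀ ρ, 0 < ρ → 0 < h ρ) (hK : 1 ≤ K)
    (hle : ∀ ρ, 0 < ρ → h ρ ≤ K * h' ρ) : HasEntropyGrowth (C * K ^ 2) h' η p r := by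
  have hC : 0 ≤ C := hη.pos.le
  have hK2 : K ≤ K ^ 2 := le_self_pow₀ hK two_ne_zero
  have hquad {ρ : ℝ} (hρ : 0 < ρ) (u : ℝ) : u ^ 2 + h ρ ^ 2 ≤ K ^ 2 * (u ^ 2 + h' ρ ^ 2) := by
    have hsq := pow_le_pow_left₀ (hh ρ hρ).le (hle ρ hρ) 2
    nlinarith [mul_le_mul_of_nonneg_right (hK.trans hK2) (sq_nonneg u)]
  have hlin {ρ : ℝ} (hρ : 0 < ρ) (u : ℝ) : |u| + h ρ ≤ K ^ 2 * (|u| + h' ρ) := by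
    have hh' : 0 ≤ h' ρ :=
      nonneg_of_mul_nonneg_right ((hh ρ hρ).le.trans (hle ρ hρ)) (one_pos.trans_le hK)
    nlinarith [hle ρ hρ, mul_le_mul_of_nonneg_right (hK.trans hK2) (abs_nonneg u),
      mul_le_mul_of_nonneg_right hK2 hh']
  refine ⟨mul_pos hη.pos (pow_pos (one_pos.trans_le hK) 2),
    fun ρ hρ u => (hη.abs_le ρ hρ u).trans ?_, fun ρ hρ u => (hη.abs_fst_le ρ hρ u).trans ?_,
    fun ρ hρ u => (hη.abs_snd_le ρ hρ u).trans ?_⟩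
  · calc C * (ρ * (u ^ 2 + h ρ ^ 2)) ≤ C * (ρ * (K ^ 2 * (u ^ 2 + h' ρ ^ 2))) := by
          gcongr; exact hquad hρ u
      _ = C * K ^ 2 * (ρ * (u ^ 2 + h' ρ ^ 2)) := by ring
  · rw [mul_assoc]
    exact mul_le_mul_of_nonneg_left (hquad hρ u) hC
  · calc C * (ρ * (|u| + h ρ)) ≤ C * (ρ * (K ^ 2 * (|u| + h' ρ))) := by
          gcongr; exact hlin hρ u
      _ = C * K ^ 2 * (ρ * (|u| + h' ρ)) := by ring

namespace DampedWave

variable (W : DampedWave)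

/-- `η`, with first derivatives `p = η_ρ`, `r = η_u` and second derivatives `D = η_ρρ`, `A = η_ρu`,
`B = η_uu`, solves the Goursat problem for `η_ρρ = c² η_uu` in the cone `|u| ≤ k` with the data
`± (½ ρ u² + g)` on and outside the cone, and grows like these data with the constant `C`. -/
structure IsGoursatSolution (g : ℝ → ℝ) (C : ℝ) (η p r D A B : ℝ × ℝ → ℝ) : Prop
    extends HasSecondPartialsOn η p r D A B halfPlane, HasEntropyGrowth C W.k η p r where
  eq_of_k_le : ∀ ρ, 0 < ρ → ∀ u, W.k ρ ≤ u → η (ρ, u) = 1 / 2 * ρ * u ^ 2 + g ρ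
  eq_of_le_neg_k : ∀ ρ, 0 < ρ → ∀ u, u ≤ -W.k ρ → η (ρ, u) = -(1 / 2 * ρ * u ^ 2 + g ρ)
  wave : ∀ ρ, 0 < ρ → ∀ u, |u| ≤ W.k ρ → D (ρ, u) = W.c ρ ^ 2 * B (ρ, u)

variable {W} {C ρ u : ℝ} {f : ℝ × ℝ → ℝ} {g g' : ℝ → ℝ}

theorem IsTransportFixedPoint.entropyFst_of_k_le (h : W.IsTransportFixedPoint C f)
    (hg' : ∀ s, 0 < s → HasDerivAt g' (s * W.c s ^ 2) s) (hg'0 : Tendsto g' (𝓝[>] 0) (𝓝 0))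
    (hρ : 0 < ρ) (hu : W.k ρ ≤ u) : entropyFst f (ρ, u) = u ^ 2 / 2 + g' ρ := by
  have hu0 : 0 ≤ u := (W.k_pos hρ).le.trans hu
  have hfst : Tendsto (fun s => entropyFst f (s, u) - u ^ 2 / 2) (𝓝[>] 0) (𝓝 0) := by
    refine squeeze_zero_norm' ?_
      (by simpa using (W.tendsto_φ.const_mul C).const_mul u :
        Tendsto (fun s => u * (C * W.φ s)) (𝓝[>] 0) (𝓝 0))
    filter_upwards [self_mem_nhdsWithin] with s hs using h.abs_entropyFst_sub_le hs hu0
  refine eq_of_hasDerivAt_of_tendsto_sub_zero (y := fun s => entropyFst f (s, u)) hρ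
    (fun s hs => (h.hasDerivAt_entropyFst_fst hs.1).congr_deriv ?_)
    (fun s hs => (hg' s hs.1).const_add _) ?_
  · rw [h.oddPart_of_k_le hs.1 ((W.k_le hs.1 hs.2).trans hu)]
    ring
  · simpa [sub_sub] using hfst.sub hg'0

theorem IsNearAbs.tendsto_entropy (h : W.IsNearAbs C f) :
    Tendsto (fun s => entropy f (s, u)) (𝓝[>] 0) (𝓝 0) := by
  have hid : Tendsto (fun s : ℝ => s) (𝓝[>] 0) (𝓝 0) := nhdsWithin_le_nhds
  refine squeeze_zero_norm' ?_
    (by simpa using (hid.mul ((W.tendsto_k.const_mul C).const_add |u|)).const_mul |u| :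
      Tendsto (fun s => |u| * (s * (|u| + C * W.k s))) (𝓝[>] 0) (𝓝 0))
  filter_upwards [self_mem_nhdsWithin] with s hs using h.abs_entropy_le hs

theorem IsTransportFixedPoint.entropy_of_k_le (h : W.IsTransportFixedPoint C f)
    (hg : ∀ s, 0 < s → HasDerivAt g (g' s) s) (hg0 : Tendsto g (𝓝[>] 0) (𝓝 0))
    (hg' : ∀ s, 0 < s → HasDerivAt g' (s * W.c s ^ 2) s) (hg'0 : Tendsto g' (𝓝[>] 0) (𝓝 0))
    (hρ : 0 < ρ) (hu : W.k ρ ≤ u) : entropy f (ρ, u) = 1 / 2 * ρ * u ^ 2 + g ρ := by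
  have hlinear (s : ℝ) : HasDerivAt (fun s => 1 / 2 * s * u ^ 2) (u ^ 2 / 2) s :=
    (((hasDerivAt_id s).const_mul (1 / 2)).mul_const (u ^ 2)).congr_deriv (by ring)
  have hlinear0 : Tendsto (fun s : ℝ => 1 / 2 * s * u ^ 2) (𝓝[>] 0) (𝓝 0) := by
    simpa using (hlinear 0).continuousAt.tendsto.mono_left (nhdsWithin_le_nhds (s := Ioi 0))
  refine eq_of_hasDerivAt_of_tendsto_sub_zero (y := fun s => entropy f (s, u)) hρ
    (fun s hs => h.hasSecondPartialsOn_entropy.zero.fst (s, u) (mk_mem_halfPlane.2 hs.1))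
    (fun s hs => ((hlinear s).add (hg s hs.1)).congr_deriv ?_) ?_
  · exact (h.entropyFst_of_k_le hg' hg'0 hs.1 ((W.k_le hs.1 hs.2).trans hu)).symm
  · simpa using h.tendsto_entropy.sub (hlinear0.add hg0)

variable (W) in
theorem exists_isGoursatSolution (hg : ∀ s, 0 < s → HasDerivAt g (g' s) s)
    (hg0 : Tendsto g (𝓝[>] 0) (𝓝 0)) (hg' : ∀ s, 0 < s → HasDerivAt g' (s * W.c s ^ 2) s)
    (hg'0 : Tendsto g' (𝓝[>] 0) (𝓝 0)) : ∃ C η p r D A B, W.IsGoursatSolution g C η p r D A B := by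
  obtain ⟨C, f, h⟩ := W.exists_isTransportFixedPoint
  have hC : 0 ≤ C := h.nonneg
  have hquad {ρ : ℝ} (hρ : 0 < ρ) (u : ℝ) :
      |u| * (|u| + C * W.k ρ) ≤ (1 + C) * (u ^ 2 + W.k ρ ^ 2) := by
    have hk := (W.k_pos hρ).le
    have hmul : |u| * W.k ρ ≤ u ^ 2 + W.k ρ ^ 2 := by
      nlinarith [sq_nonneg (|u| - W.k ρ), sq_abs u, mul_nonneg (abs_nonneg u) hk]
    nlinarith [mul_le_mul_of_nonneg_left hmul hC, sq_abs u, sq_nonneg (W.k ρ)]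
  have hgrowth : HasEntropyGrowth (1 + C) W.k (entropy f) (entropyFst f) (entropySnd f) := by
    refine ⟨by linarith, fun ρ hρ u => ?_,
      fun ρ hρ u => (h.abs_entropyFst_le hρ).trans (hquad hρ u),
      fun ρ hρ u => (h.abs_entropySnd_le hρ).trans ?_⟩
    · calc |entropy f (ρ, u)| ≤ |u| * (ρ * (|u| + C * W.k ρ)) := h.abs_entropy_le hρ
        _ = ρ * (|u| * (|u| + C * W.k ρ)) := by ring
        _ ≤ ρ * ((1 + C) * (u ^ 2 + W.k ρ ^ 2)) := mul_le_mul_of_nonneg_left (hquad hρ u) hρ.le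
        _ = (1 + C) * (ρ * (u ^ 2 + W.k ρ ^ 2)) := by ring
    · have hk := (W.k_pos hρ).le
      nlinarith [mul_nonneg hρ.le (add_nonneg (mul_nonneg hC (abs_nonneg u)) hk)]
  refine ⟨1 + C, _, _, _, _, _, _, h.hasSecondPartialsOn_entropy, hgrowth,
    fun ρ hρ u => h.entropy_of_k_le hg hg0 hg' hg'0 hρ, fun ρ hρ u hu => ?_, fun ρ hρ u _ => ?_⟩
  · rw [← neg_neg u, entropy_neg, h.entropy_of_k_le hg hg0 hg' hg'0 hρ (le_neg_of_le_neg hu),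
      neg_neg, neg_sq]
  · linear_combination -(W.c ρ * oddPart f (ρ, u)) * W.μ_sq_mul_c hρ

theorem isBackwardInvariant_strip (W : DampedWave) (R : ℝ) :
    W.IsBackwardInvariant {x | x.1 ∈ Ioc 0 R} where
  fst_pos _ hx := hx.1
  leftChar_mem _ hx _ hs := ⟨hs.1, hs.2.trans hx.2⟩
  rightChar_mem _ hx _ hs := ⟨hs.1, hs.2.trans hx.2⟩

variable {d p r D A B : ℝ × ℝ → ℝ}

theorem isDiagonalSystem_of_wave (hp : HasPartialsOn p D A halfPlane)
    (hr : HasPartialsOn r A B halfPlane) (hwave : ∀ x ∈ halfPlane, D x = W.c x.1 ^ 2 * B x)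
    (S : Set (ℝ × ℝ)) :
    W.IsDiagonalSystem (fun x => p x + W.c x.1 * r x) (fun x => p x - W.c x.1 * r x) S where
  left x _ s hs := by
    have hmem : W.leftChar x s ∈ halfPlane := mk_mem_halfPlane.2 hs.1
    have hchar := W.hasDerivAt_leftChar_snd (x := x) hs.1
    refine ((W.hasDerivAt_μ hs.1).mul
      ((hp.hasDerivAt_comp_graph isOpen_halfPlane hmem hchar).add ((W.hasDerivAt_c hs.1).mul
        (hr.hasDerivAt_comp_graph isOpen_halfPlane hmem hchar)))).congr_deriv ?_
    have hwave_s := hwave _ hmem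
    simp only [Pi.add_apply, Pi.mul_apply, leftChar] at hwave_s ⊢
    linear_combination W.μ s * hwave_s +
      r (s, x.2 + W.k x.1 - W.k s) * W.two_mul_μ'_mul_c hs.1
  right x _ s hs := by
    have hmem : W.rightChar x s ∈ halfPlane := mk_mem_halfPlane.2 hs.1
    have hchar := W.hasDerivAt_rightChar_snd (x := x) hs.1
    refine ((W.hasDerivAt_μ hs.1).mul
      ((hp.hasDerivAt_comp_graph isOpen_halfPlane hmem hchar).sub ((W.hasDerivAt_c hs.1).mul
        (hr.hasDerivAt_comp_graph isOpen_halfPlane hmem hchar)))).congr_deriv ?_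
    have hwave_s := hwave _ hmem
    simp only [Pi.sub_apply, Pi.mul_apply, rightChar] at hwave_s ⊢
    linear_combination W.μ s * hwave_s -
      r (s, x.2 - W.k x.1 + W.k s) * W.two_mul_μ'_mul_c hs.1

theorem partials_eq_zero_of_wave (hp : HasPartialsOn p D A halfPlane)
    (hr : HasPartialsOn r A B halfPlane) (hwave : ∀ x ∈ halfPlane, D x = W.c x.1 ^ 2 * B x)
    (hbound : ∀ x ∈ halfPlane, |p x| + W.c x.1 * |r x| ≤ C * W.k x.1 ^ 2) :
    ∀ x ∈ halfPlane, p x = 0 ∧ r x = 0 := fun x hx => by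
  have hc {y : ℝ × ℝ} (hy : 0 < y.1) : 0 < W.c y.1 := W.c_pos y.1 hy
  have hC : 0 ≤ C := nonneg_of_mul_nonneg_left
    ((add_nonneg (abs_nonneg _) (mul_nonneg (hc hx.1).le (abs_nonneg _))).trans (hbound x hx))
    (pow_pos (W.k_pos hx.1) 2)
  have hbound_φ {y : ℝ × ℝ} (hy : y.1 ∈ Ioc 0 x.1) :
      |p y| + |W.c y.1 * r y| ≤ C * (W.k x.1 * W.M) * W.φ y.1 := by
    have hk := mul_le_mul (W.k_le hy.1 hy.2) (W.k_le_M_mul_φ hy.1) (W.k_pos hy.1).le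
      (W.k_pos hx.1).le
    rw [abs_mul, abs_of_pos (hc hy.1)]
    calc |p y| + W.c y.1 * |r y| ≤ C * W.k y.1 ^ 2 := hbound y (mk_mem_halfPlane.2 hy.1)
      _ ≤ C * (W.k x.1 * (W.M * W.φ y.1)) := mul_le_mul_of_nonneg_left (by rwa [sq]) hC
      _ = C * (W.k x.1 * W.M) * W.φ y.1 := by ring
  have hzero := (isDiagonalSystem_of_wave hp hr hwave {y | y.1 ∈ Ioc 0 x.1}).eq_zero
    (W.isBackwardInvariant_strip x.1) (fun y hy => (abs_add_le _ _).trans (hbound_φ hy))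
    (fun y hy => (abs_sub _ _).trans (hbound_φ hy)) x ⟨hx.1, le_rfl⟩
  have hcr : W.c x.1 * r x = 0 := by linarith [hzero.1, hzero.2]
  exact ⟨by linarith [hzero.1, hzero.2], (mul_eq_zero.1 hcr).resolve_left (hc hx.1).ne'⟩

theorem isOpen_exterior (W : DampedWave) : IsOpen {x | x ∈ halfPlane ∧ W.k x.1 < |x.2|} := by
  refine isOpen_iff_mem_nhds.2 fun x hx => ?_
  have hk : ContinuousAt (fun x : ℝ × ℝ => W.k x.1) x :=
    (W.hasDerivAt_k x.1 hx.1.1).continuousAt.comp continuousAt_fst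
  have habs : ContinuousAt (fun x : ℝ × ℝ => |x.2|) x := by fun_prop
  exact (isOpen_halfPlane.eventually_mem hx.1).and (hk.eventually_lt habs hx.2)

theorem eq_zero_of_wave_of_exterior (h : HasSecondPartialsOn d p r D A B halfPlane)
    (hwave : ∀ x ∈ halfPlane, |x.2| ≤ W.k x.1 → D x = W.c x.1 ^ 2 * B x)
    (hbound : ∀ x ∈ halfPlane, |x.2| ≤ W.k x.1 → |p x| + W.c x.1 * |r x| ≤ C * W.k x.1 ^ 2)
    (hout : ∀ x ∈ halfPlane, W.k x.1 ≤ |x.2| → d x = 0) : ∀ x ∈ halfPlane, d x = 0 := fun x hx => by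
  have hext : {y | y ∈ halfPlane ∧ W.k y.1 < |y.2|} ⊆ halfPlane := fun y hy => hy.1
  have hfirst := (h.zero.mono hext).eq_zero_of_eq_zero W.isOpen_exterior
    fun y hy => hout y hy.1 hy.2.le
  have hp0 := (h.fst.mono hext).eq_zero_of_eq_zero W.isOpen_exterior fun y hy => (hfirst y hy).1
  have hr0 := (h.snd.mono hext).eq_zero_of_eq_zero W.isOpen_exterior fun y hy => (hfirst y hy).2
  have hC : 0 ≤ C := nonneg_of_mul_nonneg_left
    ((add_nonneg (abs_nonneg _) (mul_nonneg (W.c_pos x.1 hx.1).le (abs_nonneg _))).trans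
      (hbound (x.1, 0) (mk_mem_halfPlane.2 hx.1) (by simpa using (W.k_pos hx.1).le)))
    (pow_pos (W.k_pos hx.1) 2)
  have hpartials := partials_eq_zero_of_wave (C := C) h.fst h.snd
    (fun y hy => (le_or_gt |y.2| (W.k y.1)).elim (hwave y hy) fun hlt => by
      rw [(hp0 y ⟨hy, hlt⟩).1, (hr0 y ⟨hy, hlt⟩).2, mul_zero])
    (fun y hy => (le_or_gt |y.2| (W.k y.1)).elim (hbound y hy) fun hlt => by
      rw [(hfirst y ⟨hy, hlt⟩).1, (hfirst y ⟨hy, hlt⟩).2, abs_zero, mul_zero, add_zero]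
      positivity)
  have hsnd (v : ℝ) : HasDerivAt (fun v => d (x.1, v)) 0 v :=
    (h.zero.snd (x.1, v) (mk_mem_halfPlane.2 hx.1)).congr_deriv
      (hpartials _ (mk_mem_halfPlane.2 hx.1)).2
  exact (is_const_of_deriv_eq_zero (fun v => (hsnd v).differentiableAt) (fun v => (hsnd v).deriv)
    x.2 (W.k x.1)).trans (hout (x.1, W.k x.1) (mk_mem_halfPlane.2 hx.1) (le_abs_self _))

variable {C' : ℝ} {η η' p' r' D' A' B' : ℝ × ℝ → ℝ}

theorem IsGoursatSolution.abs_fst_add_mul_abs_snd_le (h : W.IsGoursatSolution g C η p r D A B) :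
    ∀ x ∈ halfPlane, |x.2| ≤ W.k x.1 →
      |p x| + W.c x.1 * |r x| ≤ (2 * C * (1 + W.M)) * W.k x.1 ^ 2 := fun x hx hle => by
  have hρ : 0 < x.1 := hx.1
  have hk := W.k_pos hρ
  have hfst := h.abs_fst_le x.1 hρ x.2
  have hC : 0 ≤ C := h.pos.le
  have hsq : x.2 ^ 2 ≤ W.k x.1 ^ 2 := sq_le_sq.2 (by rwa [abs_of_pos hk])
  have hp : |p x| ≤ 2 * C * W.k x.1 ^ 2 := by linarith [mul_le_mul_of_nonneg_left hsq hC]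
  have hr : |r x| ≤ C * (x.1 * (2 * W.k x.1)) :=
    (h.abs_snd_le x.1 hρ x.2).trans (by gcongr; linarith)
  have hcr : W.c x.1 * |r x| ≤ 2 * C * W.M * W.k x.1 ^ 2 := by
    calc W.c x.1 * |r x| ≤ W.c x.1 * (C * (x.1 * (2 * W.k x.1))) :=
          mul_le_mul_of_nonneg_left hr (W.c_pos _ hρ).le
      _ = 2 * C * W.k x.1 * (x.1 * W.c x.1) := by ring
      _ ≤ 2 * C * W.k x.1 * (W.M * W.k x.1) :=
          mul_le_mul_of_nonneg_left (W.mul_c_le _ hρ) (by positivity)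
      _ = 2 * C * W.M * W.k x.1 ^ 2 := by ring
  linarith

theorem IsGoursatSolution.unique (h : W.IsGoursatSolution g C η p r D A B)
    (h' : W.IsGoursatSolution g C' η' p' r' D' A' B') : ∀ x ∈ halfPlane, η x = η' x :=
  fun x hx => sub_eq_zero.1 <| eq_zero_of_wave_of_exterior
    ⟨h.zero.sub h'.zero, h.fst.sub h'.fst, h.snd.sub h'.snd⟩
    (fun y hy hle => by
      rw [h.wave y.1 hy.1 y.2 hle, h'.wave y.1 hy.1 y.2 hle, mul_sub])
    (C := 2 * C * (1 + W.M) + 2 * C' * (1 + W.M))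
    (fun y hy hle => by
      have hp := abs_sub (p y) (p' y)
      have hr := mul_le_mul_of_nonneg_left (abs_sub (r y) (r' y)) (W.c_pos y.1 hy.1).le
      linarith [h.abs_fst_add_mul_abs_snd_le y hy hle,
        h'.abs_fst_add_mul_abs_snd_le y hy hle])
    (fun y hy hle => sub_eq_zero.2 <| (le_abs'.1 hle).elim
      (fun hu => (h.eq_of_le_neg_k y.1 hy.1 y.2 hu).trans (h'.eq_of_le_neg_k y.1 hy.1 y.2 hu).symm)
      fun hu => (h.eq_of_k_le y.1 hy.1 y.2 hu).trans (h'.eq_of_k_le y.1 hy.1 y.2 hu).symm) x hx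

end DampedWave

end Goursat

section HalfLine

open scoped Topology
open Asymptotics

variable {f g g₀ g₁ F f' F' : ℝ → ℝ} {R : ℝ}

theorem isBigO_principal_Icc (hf : ContinuousOn f (Ioi 0)) (hg : ContinuousOn g (Ioi 0))
    (hg0 : ∀ ρ, 0 < ρ → g ρ ≠ 0) {r : ℝ} (hr : 0 < r) : f =O[𝓟 (Icc r R)] g := by
  have hsub : Icc r R ⊆ Ioi 0 := fun ρ hρ => hr.trans_le hρ.1
  exact ((hf.mono hsub).isBigO_principal isCompact_Icc (c := (1 : ℝ)) (by simp)).trans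
    ((hg.mono hsub).isBigO_rev_principal isCompact_Icc (fun ρ hρ => hg0 ρ (hsub hρ)) 1)

theorem isBigO_principal_Ioc (hf : ContinuousOn f (Ioi 0)) (hg : ContinuousOn g (Ioi 0))
    (hg0 : ∀ ρ, 0 < ρ → g ρ ≠ 0) (h : f =O[𝓝[>] 0] g) : f =O[𝓟 (Ioc 0 R)] g := by
  obtain ⟨C, hC⟩ := h.bound
  obtain ⟨r, hr, hrC⟩ := mem_nhdsGT_iff_exists_Ioc_subset.1 hC
  have hend : f =O[𝓟 (Ioc 0 r)] g := isBigO_principal.2 ⟨C, fun ρ hρ => hrC hρ⟩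
  refine (hend.sup (isBigO_principal_Icc hf hg hg0 hr (R := R))).mono ?_
  rw [sup_principal, le_principal_iff, mem_principal]
  exact fun ρ hρ => (le_total ρ r).imp (fun h => ⟨hρ.1, h⟩) fun h => ⟨h, hρ.2⟩

theorem isBigO_principal_Ioi (hf : ContinuousOn f (Ioi 0)) (hg : ContinuousOn g (Ioi 0))
    (hg0 : ∀ ρ, 0 < ρ → g ρ ≠ 0) (hR : 0 < R) (h : f =O[atTop] g) : f =O[𝓟 (Ioi R)] g := by
  obtain ⟨C, hC⟩ := h.bound
  obtain ⟨r, hrC⟩ := eventually_atTop.1 hC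
  have hend : f =O[𝓟 (Ici r)] g := isBigO_principal.2 ⟨C, fun ρ hρ => hrC ρ hρ⟩
  refine ((isBigO_principal_Icc hf hg hg0 hR (R := r)).sup hend).mono ?_
  rw [sup_principal, le_principal_iff, mem_principal]
  exact fun ρ hρ => (le_total ρ r).imp (fun h => ⟨(mem_Ioi.1 hρ).le, h⟩) id

theorem principal_Ioc_sup_principal_Ioi (hR : 0 < R) : 𝓟 (Ioc 0 R) ⊔ 𝓟 (Ioi R) = 𝓟 (Ioi 0) := by
  rw [sup_principal, Ioc_union_Ioi_eq_Ioi hR.le]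

theorem isBigO_principal_Ioi_zero (hf : ContinuousOn f (Ioi 0)) (hg : ContinuousOn g (Ioi 0))
    (hg0 : ∀ ρ, 0 < ρ → g ρ ≠ 0) (h₀ : f =O[𝓝[>] 0] g) (h₁ : f =O[atTop] g) :
    f =O[𝓟 (Ioi 0)] g := by
  rw [← principal_Ioc_sup_principal_Ioi one_pos]
  exact (isBigO_principal_Ioc hf hg hg0 h₀).sup (isBigO_principal_Ioi hf hg hg0 one_pos h₁)

theorem isTheta_piecewise (hf : ContinuousOn f (Ioi 0)) (hf0 : ∀ ρ, 0 < ρ → f ρ ≠ 0)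
    (hg₀ : ContinuousOn g₀ (Ioi 0)) (hg₀0 : ∀ ρ, 0 < ρ → g₀ ρ ≠ 0)
    (hg₁ : ContinuousOn g₁ (Ioi 0)) (hg₁0 : ∀ ρ, 0 < ρ → g₁ ρ ≠ 0) (hR : 0 < R)
    (h₀ : f =Θ[𝓝[>] 0] g₀) (h₁ : f =Θ[atTop] g₁) :
    f =Θ[𝓟 (Ioi 0)] fun ρ => if ρ ≤ R then g₀ ρ else g₁ ρ := by
  rw [← principal_Ioc_sup_principal_Ioi hR]
  refine IsTheta.sup (IsTheta.trans_eventuallyEq (g₁ := g₀)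
      ⟨isBigO_principal_Ioc hf hg₀ hg₀0 h₀.1, isBigO_principal_Ioc hg₀ hf hf0 h₀.2⟩ ?_)
    (IsTheta.trans_eventuallyEq (g₁ := g₁)
      ⟨isBigO_principal_Ioi hf hg₁ hg₁0 hR h₁.1, isBigO_principal_Ioi hg₁ hf hf0 hR h₁.2⟩ ?_)
  · exact eventually_principal.2 fun ρ hρ => (if_pos hρ.2).symm
  · exact eventually_principal.2 fun ρ hρ => (if_neg (not_le.2 hρ)).symm

theorem isBigO_nhdsGT_zero_of_isBigO_deriv (hf : ∀ ρ, 0 < ρ → HasDerivAt f (f' ρ) ρ)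
    (hF : ∀ ρ, 0 < ρ → HasDerivAt F (F' ρ) ρ) (hf0 : ∀ ρ, 0 < ρ → 0 < f ρ)
    (hF' : ∀ᶠ ρ in 𝓝[>] 0, 0 ≤ F' ρ) (h : f' =O[𝓝[>] 0] F') (hft : Tendsto f (𝓝[>] 0) (𝓝 0))
    (hFt : Tendsto F (𝓝[>] 0) (𝓝 0)) : f =O[𝓝[>] 0] F := by
  obtain ⟨C, hC⟩ := h.bound
  obtain ⟨r, hr, hrC⟩ := mem_nhdsGT_iff_exists_Ioc_subset.1 (hC.and hF')
  refine IsBigO.of_bound |C| ?_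
  filter_upwards [Ioc_mem_nhdsGT hr] with ρ hρ
  have hle : f ρ ≤ C * F ρ := by
    refine le_of_deriv_le_of_tendsto_zero hρ.1 (fun s hs => hf s hs.1)
      (fun s hs => (hF s hs.1).const_mul C) (fun s hs => ?_) hft (by simpa using hFt.const_mul C)
    obtain ⟨hs1, hs2⟩ := hrC ⟨hs.1, hs.2.trans hρ.2⟩
    exact (le_abs_self _).trans (hs1.trans_eq (by rw [Real.norm_of_nonneg hs2]))
  rw [Real.norm_of_nonneg (hf0 ρ hρ.1).le, Real.norm_eq_abs, ← abs_mul]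
  exact hle.trans (le_abs_self _)

theorem isBigO_atTop_of_isBigO_deriv (hf : ∀ ρ, 0 < ρ → HasDerivAt f (f' ρ) ρ)
    (hF : ∀ ρ, 0 < ρ → HasDerivAt F (F' ρ) ρ) (hf0 : ∀ ρ, 0 < ρ → 0 < f ρ)
    (hF0 : ∀ ρ, 0 < ρ → 0 < F ρ) (hF' : ∀ᶠ ρ in atTop, 0 ≤ F' ρ) (h : f' =O[atTop] F') :
    f =O[atTop] F := by
  obtain ⟨C, hC0, hC⟩ := h.exists_pos
  obtain ⟨r, hr⟩ := eventually_atTop.1 ((hC.bound.and hF').and (eventually_gt_atTop 0))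
  have hpos {ρ : ℝ} (hρ : r ≤ ρ) : 0 < ρ := (hr ρ hρ).2
  have hmono {G G' : ℝ → ℝ} (hG : ∀ ρ, 0 < ρ → HasDerivAt G (G' ρ) ρ)
      (hG' : ∀ ρ, r ≤ ρ → 0 ≤ G' ρ) : MonotoneOn G (Ici r) := by
    refine monotoneOn_of_deriv_nonneg (convex_Ici r)
      (fun ρ hρ => (hG ρ (hpos hρ)).continuousAt.continuousWithinAt)
      (fun ρ hρ => (hG ρ (hpos (interior_subset hρ))).differentiableAt.differentiableWithinAt)
      fun ρ hρ => ?_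
    rw [(hG ρ (hpos (interior_subset hρ))).deriv]
    exact hG' ρ (interior_subset hρ)
  have hFmono : MonotoneOn F (Ici r) := hmono hF fun ρ hρ => (hr ρ hρ).1.2
  have hdiff : MonotoneOn (fun ρ => C * F ρ - f ρ) (Ici r) :=
    hmono (fun ρ hρ => ((hF ρ hρ).const_mul C).sub (hf ρ hρ)) fun ρ hρ => by
      have hle := (hr ρ hρ).1.1
      rw [Real.norm_of_nonneg (hr ρ hρ).1.2] at hle
      exact sub_nonneg.2 ((le_abs_self _).trans hle)
  refine IsBigO.of_bound (f r / F r + C) ?_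
  filter_upwards [eventually_ge_atTop r] with ρ hρ
  rw [Real.norm_of_nonneg (hf0 ρ (hpos hρ)).le, Real.norm_of_nonneg (hF0 ρ (hpos hρ)).le]
  have hFr := hF0 r (hpos le_rfl)
  have hfr := hf0 r (hpos le_rfl)
  calc f ρ ≤ f r + C * (F ρ - F r) := by linarith [hdiff self_mem_Ici hρ hρ]
    _ ≤ f r / F r * F r + C * F ρ := by
        rw [div_mul_cancel₀ _ hFr.ne']
        linarith [mul_pos hC0 hFr]
    _ ≤ f r / F r * F ρ + C * F ρ := by gcongr; exact hFmono self_mem_Ici hρ hρ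
    _ = (f r / F r + C) * F ρ := by ring

theorem isBigO_of_isBigO_deriv (hf : ∀ ρ, 0 < ρ → HasDerivAt f (f' ρ) ρ)
    (hF : ∀ ρ, 0 < ρ → HasDerivAt F (F' ρ) ρ) (hf0 : ∀ ρ, 0 < ρ → 0 < f ρ)
    (hF0 : ∀ ρ, 0 < ρ → 0 < F ρ) (hft : Tendsto f (𝓝[>] 0) (𝓝 0))
    (hFt : Tendsto F (𝓝[>] 0) (𝓝 0)) (hF' : ∀ᶠ ρ in 𝓝[>] 0 ⊔ atTop, 0 ≤ F' ρ)
    (h : f' =O[𝓝[>] 0 ⊔ atTop] F') : f =O[𝓟 (Ioi 0)] F := by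
  obtain ⟨hF'₀, hF'₁⟩ := eventually_sup.1 hF'
  obtain ⟨h₀, h₁⟩ := isBigO_sup.1 h
  exact isBigO_principal_Ioi_zero (fun ρ hρ => (hf ρ hρ).continuousAt.continuousWithinAt)
    (fun ρ hρ => (hF ρ hρ).continuousAt.continuousWithinAt) (fun ρ hρ => (hF0 ρ hρ).ne')
    (isBigO_nhdsGT_zero_of_isBigO_deriv hf hF hf0 hF'₀ h₀ hft hFt)
    (isBigO_atTop_of_isBigO_deriv hf hF hf0 hF0 hF'₁ h₁)

theorem integrableOn_Ioc_of_isBigO_rpow {a : ℝ} (hf : ContinuousOn f (Ioi 0)) (ha : 0 < a)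
    (h : f =O[𝓝[>] 0] fun ρ => ρ ^ (a - 1)) (R : ℝ) : IntegrableOn f (Ioc 0 R) := by
  have hpow : IntegrableOn (fun ρ : ℝ => ρ ^ (a - 1)) (Ioc 0 R) :=
    (intervalIntegral.intervalIntegrable_rpow' (by linarith)).1
  have hcont : ContinuousOn (fun ρ : ℝ => ρ ^ (a - 1)) (Ioi 0) :=
    fun ρ hρ => (Real.continuousAt_rpow_const _ _ (.inl (ne_of_gt hρ))).continuousWithinAt
  obtain ⟨C, hC⟩ := isBigO_principal.1 (isBigO_principal_Ioc (R := R) hf hcont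
    (fun ρ hρ => (Real.rpow_pos_of_pos hρ _).ne') h)
  exact Integrable.mono' (hpow.norm.const_mul C)
    ((hf.mono Ioc_subset_Ioi_self).aestronglyMeasurable measurableSet_Ioc)
    (by filter_upwards [ae_restrict_mem measurableSet_Ioc] using hC)

theorem hasDerivAt_integral_zero (hf : ContinuousOn f (Ioi 0))
    (hint : ∀ R, IntegrableOn f (Ioc 0 R)) {ρ : ℝ} (hρ : 0 < ρ) :
    HasDerivAt (fun ρ => ∫ s in 0..ρ, f s) (f ρ) ρ :=
  intervalIntegral.integral_hasDerivAt_right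
    ((intervalIntegrable_iff_integrableOn_Ioc_of_le hρ.le).2 (hint ρ))
    (hf.stronglyMeasurableAtFilter isOpen_Ioi ρ hρ) (hf.continuousAt (Ioi_mem_nhds hρ))

theorem tendsto_integral_zero (hint : IntegrableOn f (Ioc 0 R)) (hR : 0 < R) :
    Tendsto (fun ρ => ∫ s in 0..ρ, f s) (𝓝[>] 0) (𝓝 0) := by
  have hcont := intervalIntegral.continuousOn_primitive_interval (a := 0) (b := R) (f := f)
    (μ := volume) (by rwa [uIcc_of_le hR.le, integrableOn_Icc_iff_integrableOn_Ioc])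
  have hzero := (hcont 0 left_mem_uIcc).tendsto
  rw [intervalIntegral.integral_same, uIcc_of_le hR.le] at hzero
  rw [← nhdsWithin_Ioc_eq_nhdsGT hR]
  exact hzero.mono_left (nhdsWithin_mono _ Ioc_subset_Icc_self)

end HalfLine

section Damping

open scoped Topology
open Asymptotics

/-- The logarithmic derivative `μ'/μ` of the integrating factor `μ = c^(-1/2)` when `c = σ/ρ`. -/
noncomputable def transportRate (σ : ℝ → ℝ) (ρ : ℝ) : ℝ := (σ ρ - ρ * deriv σ ρ) / (2 * ρ * σ ρ)

/-- A damping factor whose logarithmic derivative `L/(1+ρ)²` is integrable on `(0,∞)`. -/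
noncomputable def dampingFactor (L ρ : ℝ) : ℝ := Real.exp (-(L / (1 + ρ)))

variable {σ k w w' : ℝ → ℝ} {q L ρ : ℝ}

theorem dampingFactor_pos : 0 < dampingFactor L ρ := Real.exp_pos _

theorem hasDerivAt_dampingFactor (hρ : 0 < ρ) :
    HasDerivAt (dampingFactor L) (dampingFactor L ρ * (L / (1 + ρ) ^ 2)) ρ := by
  have h1 : 1 + ρ ≠ 0 := by positivity
  refine (((hasDerivAt_const ρ L).div ((hasDerivAt_id ρ).const_add 1) h1).neg).exp.congr_deriv ?_
  simp only [dampingFactor, Pi.neg_apply, Pi.div_apply, id]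
  field_simp
  ring

theorem dampingFactor_le_one (hL : 0 ≤ L) (hρ : 0 < ρ) : dampingFactor L ρ ≤ 1 :=
  Real.exp_le_one_iff.2 (neg_nonpos.2 (by positivity))

theorem one_le_exp_mul_dampingFactor (hL : 0 ≤ L) (hρ : 0 < ρ) :
    1 ≤ Real.exp L * dampingFactor L ρ := by
  rw [dampingFactor, ← Real.exp_add, Real.one_le_exp_iff, ← sub_eq_add_neg, sub_nonneg]
  exact div_le_self hL (by linarith)

theorem hasDerivAt_transportFactor_div (hσ : DifferentiableAt ℝ σ ρ) (hpos : 0 < σ ρ)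
    (hρ : 0 < ρ) :
    HasDerivAt (transportFactor fun s => σ s / s)
      (transportRate σ ρ * transportFactor (fun s => σ s / s) ρ) ρ := by
  refine (hasDerivAt_transportFactor (hσ.hasDerivAt.div (hasDerivAt_id ρ) hρ.ne')
    (div_pos hpos hρ)).congr_deriv ?_
  congr 1
  simp only [transportRate, id, Pi.div_apply]
  field_simp
  ring

theorem hasTransportRatio_of_abs_transportRate_mul_le (hσ : ∀ ρ, 0 < ρ → DifferentiableAt ℝ σ ρ)
    (hpos : ∀ ρ, 0 < ρ → 0 < σ ρ) (hw : ∀ ρ, 0 < ρ → HasDerivAt w (w' ρ) ρ)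
    (h : ∀ ρ, 0 < ρ → |transportRate σ ρ| * w ρ ≤ q * (transportRate σ ρ * w ρ + w' ρ)) :
    HasTransportRatio (fun s => σ s / s) q w := by
  refine ⟨fun ρ hρ => (hw ρ hρ).differentiableAt, fun ρ hρ => ?_⟩
  have hμ := hasDerivAt_transportFactor_div (hσ ρ hρ) (hpos ρ hρ) hρ
  have hμ0 : 0 ≤ transportFactor (fun s => σ s / s) ρ := inv_nonneg.2 (Real.sqrt_nonneg _)
  have hμw : HasDerivAt (fun s => transportFactor (fun s => σ s / s) s * w s) _ ρ :=
    hμ.mul (hw ρ hρ)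
  rw [hμ.deriv, hμw.deriv, abs_mul, abs_of_nonneg hμ0]
  linarith [mul_le_mul_of_nonneg_right (h ρ hρ) hμ0]

theorem mul_transportRate_le_one (hpos : 0 < σ ρ) (hρ : 0 < ρ)
    (hslope : -σ ρ ≤ ρ * deriv σ ρ) : ρ * transportRate σ ρ ≤ 1 := by
  rw [transportRate, ← mul_div_assoc, div_le_one (by positivity)]
  nlinarith

theorem exists_neg_transportRate_le (hσ : ContDiffOn ℝ 1 σ (Ioi 0)) (hpos : ∀ ρ, 0 < ρ → 0 < σ ρ)
    (hend : ∀ᶠ ρ in 𝓝[>] 0 ⊔ atTop, ρ * deriv σ ρ ≤ σ ρ) (a : ℝ) :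
    ∃ L, 0 ≤ L ∧ ∀ ρ, 0 < ρ → a * max (-transportRate σ ρ) 0 ≤ L / (1 + ρ) ^ 2 := by
  have hσ' : ContinuousOn (deriv σ) (Ioi 0) := hσ.continuousOn_deriv_of_isOpen isOpen_Ioi le_rfl
  have hrate : ContinuousOn (transportRate σ) (Ioi 0) :=
    (hσ.continuousOn.sub (continuousOn_id.mul hσ')).div
      ((continuousOn_const.mul continuousOn_id).mul hσ.continuousOn)
      fun ρ hρ => (mul_pos (mul_pos two_pos hρ) (hpos ρ hρ)).ne'
  set f : ℝ → ℝ := fun ρ => a * max (-transportRate σ ρ) 0 * (1 + ρ) ^ 2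
  have hf : ContinuousOn f (Ioi 0) := by fun_prop
  have hzero : f =ᶠ[𝓝[>] 0 ⊔ atTop] 0 := by
    have hρ : ∀ᶠ ρ : ℝ in 𝓝[>] 0 ⊔ atTop, 0 < ρ :=
      eventually_sup.2 ⟨eventually_mem_nhdsWithin, eventually_gt_atTop 0⟩
    filter_upwards [hend, hρ] with ρ hle hρ
    have hnonneg : 0 ≤ transportRate σ ρ :=
      div_nonneg (sub_nonneg.2 hle) (mul_pos (mul_pos two_pos hρ) (hpos ρ hρ)).le
    simp [f, hnonneg]
  obtain ⟨h₀, h₁⟩ := isBigO_sup.1 (hzero.trans_isBigO (isBigO_zero (fun _ : ℝ => (1 : ℝ)) _))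
  obtain ⟨C, hC⟩ := isBigO_principal.1
    (isBigO_principal_Ioi_zero hf continuousOn_const (fun _ _ => one_ne_zero) h₀ h₁)
  refine ⟨max C 0, le_max_right _ _, fun ρ hρ => ?_⟩
  rw [le_div_iff₀ (by positivity)]
  exact (le_abs_self _).trans ((hC ρ hρ).trans (by simp))

theorem hasTransportRatio_dampingFactor (hσ : ∀ ρ, 0 < ρ → DifferentiableAt ℝ σ ρ)
    (hpos : ∀ ρ, 0 < ρ → 0 < σ ρ)
    (hL : ∀ ρ, 0 < ρ → 2 * max (-transportRate σ ρ) 0 ≤ L / (1 + ρ) ^ 2) :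
    HasTransportRatio (fun s => σ s / s) 1 (dampingFactor L) := by
  refine hasTransportRatio_of_abs_transportRate_mul_le hσ hpos
    (fun ρ hρ => hasDerivAt_dampingFactor hρ) fun ρ hρ => ?_
  have hrate : |transportRate σ ρ| ≤ transportRate σ ρ + L / (1 + ρ) ^ 2 := by
    have habs : |transportRate σ ρ| = transportRate σ ρ + 2 * max (-transportRate σ ρ) 0 := by
      rcases le_total 0 (transportRate σ ρ) with h | h
      · simp [abs_of_nonneg h, h]
      · rw [abs_of_nonpos h, max_eq_left (neg_nonneg.2 h)]
        ring
    linarith [hL ρ hρ]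
  linarith [mul_le_mul_of_nonneg_right hrate (dampingFactor_pos (L := L) (ρ := ρ)).le]

/-- Where `m = μ'/μ` is positive, `m ≤ 1/ρ` and `a k ≤ ρ k'` give the ratio `1/(1+a)`; where it is
negative, the damping compensates. -/
theorem hasTransportRatio_mul_dampingFactor {a : ℝ} (ha : 0 < a)
    (hσ : ∀ ρ, 0 < ρ → DifferentiableAt ℝ σ ρ) (hpos : ∀ ρ, 0 < ρ → 0 < σ ρ)
    (hslope : ∀ ρ, 0 < ρ → -σ ρ ≤ ρ * deriv σ ρ)
    (hk : ∀ ρ, 0 < ρ → HasDerivAt k (σ ρ / ρ) ρ) (hk0 : ∀ ρ, 0 < ρ → 0 ≤ k ρ)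
    (hak : ∀ ρ, 0 < ρ → a * k ρ ≤ σ ρ)
    (hL : ∀ ρ, 0 < ρ → (2 + a) * max (-transportRate σ ρ) 0 ≤ L / (1 + ρ) ^ 2) :
    HasTransportRatio (fun s => σ s / s) (1 + a)⁻¹ fun ρ => k ρ * dampingFactor L ρ := by
  refine hasTransportRatio_of_abs_transportRate_mul_le hσ hpos
    (fun ρ hρ => (hk ρ hρ).mul (hasDerivAt_dampingFactor hρ)) fun ρ hρ => ?_
  have hE := dampingFactor_pos (L := L) (ρ := ρ)
  set m := transportRate σ ρ
  set D := L / (1 + ρ) ^ 2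
  have hc : 0 < σ ρ / ρ := div_pos (hpos ρ hρ) hρ
  have hD : 0 ≤ D := (by positivity : 0 ≤ (2 + a) * max (-m) 0).trans (hL ρ hρ)
  have hrate : (1 + a) * (|m| * k ρ) ≤ m * k ρ + σ ρ / ρ + k ρ * D := by
    rcases le_total 0 m with hm | hm
    · have hmk : a * (m * k ρ) ≤ σ ρ / ρ := by
        rw [le_div_iff₀ hρ]
        calc a * (m * k ρ) * ρ = ρ * m * (a * k ρ) := by ring
          _ ≤ 1 * σ ρ := mul_le_mul (mul_transportRate_le_one (hpos ρ hρ) hρ (hslope ρ hρ))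
              (hak ρ hρ) (mul_nonneg ha.le (hk0 ρ hρ)) zero_le_one
          _ = σ ρ := one_mul _
      rw [abs_of_nonneg hm]
      linarith [mul_nonneg (hk0 ρ hρ) hD]
    · have hmD := hL ρ hρ
      rw [max_eq_left (neg_nonneg.2 hm)] at hmD
      rw [abs_of_nonpos hm]
      linarith [mul_le_mul_of_nonneg_right hmD (hk0 ρ hρ)]
  rw [← div_eq_inv_mul, le_div_iff₀ (by linarith)]
  linarith [mul_le_mul_of_nonneg_right hrate hE.le]

theorem exists_dampedWave_of_isTheta (hσ : ContDiffOn ℝ 1 σ (Ioi 0)) (hpos : ∀ ρ, 0 < ρ → 0 < σ ρ)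
    (hslope : ∀ ρ, 0 < ρ → -σ ρ ≤ ρ * deriv σ ρ)
    (hend : ∀ᶠ ρ in 𝓝[>] 0 ⊔ atTop, ρ * deriv σ ρ ≤ σ ρ)
    (hc : Tendsto (fun ρ => σ ρ / ρ) (𝓝[>] 0) atTop)
    (hk : ∀ ρ, 0 < ρ → HasDerivAt k (σ ρ / ρ) ρ) (hk0 : Tendsto k (𝓝[>] 0) (𝓝 0))
    (hkσ : k =Θ[𝓟 (Ioi 0)] σ) : ∃ W : DampedWave, W.c = (fun ρ => σ ρ / ρ) ∧ W.k = k := by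
  have hdiff (ρ : ℝ) (hρ : 0 < ρ) : DifferentiableAt ℝ σ ρ :=
    (hσ.contDiffAt (Ioi_mem_nhds hρ)).differentiableAt one_ne_zero
  have hkpos (ρ : ℝ) (hρ : 0 < ρ) : 0 < k ρ :=
    pos_of_hasDerivAt_pos_of_tendsto_zero hρ (fun s hs => hk s hs.1)
      (fun s hs => div_pos (hpos s hs.1) hs.1) hk0
  obtain ⟨b, hb, hbk⟩ := hkσ.1.exists_pos
  obtain ⟨C, hC, hCk⟩ := hkσ.2.exists_pos
  rw [isBigOWith_principal] at hbk hCk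
  obtain ⟨L, hL, hrate⟩ := exists_neg_transportRate_le hσ hpos hend (2 + b⁻¹)
  refine ⟨{
    c := fun ρ => σ ρ / ρ
    k := k
    E := dampingFactor L
    q := (1 + b⁻¹)⁻¹
    M := Real.exp L + C
    contDiffOn_c := hσ.div contDiffOn_id fun ρ hρ => ne_of_gt hρ
    c_pos := fun ρ hρ => div_pos (hpos ρ hρ) hρ
    tendsto_c := hc
    hasDerivAt_k := hk
    tendsto_k := hk0
    mul_c_le := fun ρ hρ => ?_
    M_pos := by positivity
    E_le_one := fun ρ hρ => dampingFactor_le_one hL hρ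
    one_le_M_mul_E := fun ρ hρ => (one_le_exp_mul_dampingFactor hL hρ).trans <| by
      gcongr
      exacts [dampingFactor_pos.le, le_add_of_nonneg_right hC.le]
    q_pos := by positivity
    q_lt_one := inv_lt_one_of_one_lt₀ (lt_add_of_pos_right 1 (inv_pos.2 hb))
    transport_E := hasTransportRatio_dampingFactor hdiff hpos fun ρ hρ => le_trans (by
      gcongr; exact le_add_of_nonneg_right (inv_pos.2 hb).le) (hrate ρ hρ)
    transport_weight := hasTransportRatio_mul_dampingFactor (inv_pos.2 hb) hdiff hpos hslope hk
      (fun ρ hρ => (hkpos ρ hρ).le) (fun ρ hρ => ?_) hrate }, rfl, rfl⟩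
  · have hle := hCk ρ hρ
    rw [Real.norm_of_nonneg (hpos ρ hρ).le, Real.norm_of_nonneg (hkpos ρ hρ).le] at hle
    rw [mul_div_cancel₀ _ hρ.ne', add_mul]
    exact hle.trans (le_add_of_nonneg_left (mul_pos (Real.exp_pos L) (hkpos ρ hρ)).le)
  · have hle := hbk ρ hρ
    rw [Real.norm_of_nonneg (hpos ρ hρ).le, Real.norm_of_nonneg (hkpos ρ hρ).le] at hle
    exact (inv_mul_le_iff₀ hb).2 hle

end Damping

section PowerLaw

open scoped Topology
open Asymptotics

theorem isTheta_of_tendsto_mul_deriv_div {σ σ' k : ℝ → ℝ} {a b : ℝ}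
    (hσ : ∀ ρ, 0 < ρ → HasDerivAt σ (σ' ρ) ρ) (hσ0 : ∀ ρ, 0 < ρ → 0 < σ ρ)
    (hσt : Tendsto σ (𝓝[>] 0) (𝓝 0)) (hk : ∀ ρ, 0 < ρ → HasDerivAt k (σ ρ / ρ) ρ)
    (hkt : Tendsto k (𝓝[>] 0) (𝓝 0)) (ha : 0 < a) (hb : 0 < b)
    (h₀ : Tendsto (fun ρ => ρ * σ' ρ / σ ρ) (𝓝[>] 0) (𝓝 a))
    (h₁ : Tendsto (fun ρ => ρ * σ' ρ / σ ρ) atTop (𝓝 b)) : k =Θ[𝓟 (Ioi 0)] σ := by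
  have hk' {ρ : ℝ} (hρ : 0 < ρ) : 0 < σ ρ / ρ := div_pos (hσ0 ρ hρ) hρ
  have hk0 (ρ : ℝ) (hρ : 0 < ρ) : 0 < k ρ :=
    pos_of_hasDerivAt_pos_of_tendsto_zero hρ (fun s hs => hk s hs.1) (fun s hs => hk' hs.1) hkt
  simp_rw [mul_comm _ (σ' _), ← div_div_eq_mul_div] at h₀ h₁
  have hderiv : (fun ρ => σ ρ / ρ) =Θ[𝓝[>] 0 ⊔ atTop] σ' :=
    (isTheta_of_div_tendsto_nhds_ne_zero h₀ ha.ne').sup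
      (isTheta_of_div_tendsto_nhds_ne_zero h₁ hb.ne')
  have hpos : ∀ᶠ ρ : ℝ in 𝓝[>] 0 ⊔ atTop, 0 < ρ :=
    eventually_sup.2 ⟨self_mem_nhdsWithin, eventually_gt_atTop 0⟩
  have hσ' : ∀ᶠ ρ in 𝓝[>] 0 ⊔ atTop, 0 ≤ σ' ρ := by
    filter_upwards [eventually_sup.2 ⟨h₀.eventually_const_lt ha, h₁.eventually_const_lt hb⟩, hpos]
      with ρ hslope hρ
    exact ((div_pos_iff_of_pos_right (hk' hρ)).1 hslope).le
  exact ⟨isBigO_of_isBigO_deriv hk hσ hk0 hσ0 hkt hσt hσ' hderiv.1,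
    isBigO_of_isBigO_deriv hσ hk hσ0 hk0 hσt hkt (hpos.mono fun ρ hρ => (hk' hρ).le) hderiv.2⟩

theorem tendsto_rpow_nhdsGT_zero {a : ℝ} (ha : 0 < a) :
    Tendsto (fun ρ : ℝ => ρ ^ a) (𝓝[>] 0) (𝓝 0) := by
  simpa [Real.zero_rpow ha.ne'] using
    (Real.continuousAt_rpow_const 0 a (.inr ha.le)).tendsto.mono_left nhdsWithin_le_nhds

/-- `P'` and `P''` behave along `l` like the derivatives of a multiple of `ρ ^ γ`: `P'` is of the
order of `ρ ^ (γ - 1)`, and its logarithmic slope tends to `γ - 1`. -/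
structure HasPowerAsymptotics (P : ℝ → ℝ) (γ : ℝ) (l : Filter ℝ) : Prop where
  isTheta_deriv : deriv P =Θ[l] fun ρ => ρ ^ (γ - 1)
  tendsto_slope : Tendsto (fun ρ => ρ * deriv (deriv P) ρ / deriv P ρ) l (𝓝 (γ - 1))

variable {P Q : ℝ → ℝ} {γ κ ρ : ℝ} {l : Filter ℝ}

theorem hasDerivAt_rpow_mul {R : ℝ → ℝ} {R' : ℝ} (hR : HasDerivAt R R' ρ) (hρ : 0 < ρ) :
    HasDerivAt (fun x => κ * x ^ γ * R x) (κ * ρ ^ (γ - 1) * (γ * R ρ + ρ * R')) ρ := by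
  have hpow : ρ ^ γ = ρ * ρ ^ (γ - 1) := by
    rw [Real.rpow_sub_one hρ.ne', mul_div_cancel₀ _ hρ.ne']
  exact (((Real.hasDerivAt_rpow_const (.inl hρ.ne')).const_mul κ).mul hR).congr_deriv
    (by rw [hpow]; ring)

theorem HasPowerAsymptotics.of_eventuallyEq_deriv {R R' : ℝ → ℝ} {c : ℝ} (hκ : κ ≠ 0) (hc : c ≠ 0)
    (hl : ∀ᶠ ρ in l, 0 < ρ) (hP : ∀ᶠ ρ in l, deriv P =ᶠ[𝓝 ρ] fun x => κ * x ^ (γ - 1) * R x)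
    (hR : ∀ ρ, 0 < ρ → HasDerivAt R (R' ρ) ρ) (hRt : Tendsto R l (𝓝 c))
    (hR't : Tendsto (fun ρ => ρ * R' ρ) l (𝓝 0)) : HasPowerAsymptotics P γ l := by
  constructor
  · have hlim : Tendsto (fun ρ => deriv P ρ / ρ ^ (γ - 1)) l (𝓝 (κ * c)) := by
      refine (hRt.const_mul κ).congr' ?_
      filter_upwards [hl, hP] with ρ hρ hPρ
      rw [hPρ.self_of_nhds, eq_div_iff (Real.rpow_pos_of_pos hρ _).ne']
      ring
    exact (isTheta_of_div_tendsto_nhds_ne_zero hlim (mul_ne_zero hκ hc)).symm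
  · have hlim : Tendsto (fun ρ => γ - 1 + ρ * R' ρ / R ρ) l (𝓝 (γ - 1)) := by
      simpa using (hR't.div hRt hc).const_add (γ - 1)
    refine hlim.congr' ?_
    filter_upwards [hl, hP, hRt.eventually_ne hc] with ρ hρ hPρ hR0
    have hpow := (Real.rpow_pos_of_pos hρ (γ - 1)).ne'
    rw [((hasDerivAt_rpow_mul (hR ρ hρ) hρ).congr_of_eventuallyEq hPρ).deriv, hPρ.self_of_nhds,
      Real.rpow_sub_one hρ.ne']
    field_simp

theorem HasPowerAsymptotics.of_eventuallyEq (hκ : κ ≠ 0) (hγ : γ ≠ 0) (hl : ∀ᶠ ρ in l, 0 < ρ)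
    (hQ : ContDiffOn ℝ 2 Q (Ioi 0)) (hP : ∀ᶠ ρ in l, P =ᶠ[𝓝 ρ] fun x => κ * x ^ γ * (1 + Q x))
    (hQt : ∀ j ≤ 2, Tendsto (fun ρ => ρ ^ j * iteratedDeriv j Q ρ) l (𝓝 0)) :
    HasPowerAsymptotics P γ l := by
  have hQ1 (ρ : ℝ) (hρ : 0 < ρ) : HasDerivAt Q (deriv Q ρ) ρ :=
    ((hQ.contDiffAt (Ioi_mem_nhds hρ)).differentiableAt two_ne_zero).hasDerivAt
  have hQ2 (ρ : ℝ) (hρ : 0 < ρ) : HasDerivAt (deriv Q) (deriv (deriv Q) ρ) ρ :=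
    (((hQ.deriv_of_isOpen isOpen_Ioi (m := 1) one_add_one_eq_two.le).contDiffAt
      (Ioi_mem_nhds hρ)).differentiableAt one_ne_zero).hasDerivAt
  have h0 : Tendsto Q l (𝓝 0) := by simpa using hQt 0 zero_le_two
  have h1 : Tendsto (fun ρ => ρ * deriv Q ρ) l (𝓝 0) := by
    simpa [iteratedDeriv_one] using hQt 1 one_le_two
  have h2 : Tendsto (fun ρ => ρ ^ 2 * deriv (deriv Q) ρ) l (𝓝 0) := by
    simpa [iteratedDeriv_succ, iteratedDeriv_one] using hQt 2 le_rfl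
  refine .of_eventuallyEq_deriv (R := fun ρ => γ * (1 + Q ρ) + ρ * deriv Q ρ)
    (R' := fun ρ => γ * deriv Q ρ + (1 * deriv Q ρ + ρ * deriv (deriv Q) ρ)) hκ hγ hl ?_
    (fun ρ hρ => (((hQ1 ρ hρ).const_add 1).const_mul γ).add ((hasDerivAt_id ρ).mul (hQ2 ρ hρ)))
    (by simpa using ((h0.const_add 1).const_mul γ).add h1) ?_
  · filter_upwards [hl, hP] with ρ hρ hPρ
    filter_upwards [hPρ.eventuallyEq_nhds, Ioi_mem_nhds hρ] with x hPx hx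
    exact ((hasDerivAt_rpow_mul ((hQ1 x hx).const_add 1) hx).congr_of_eventuallyEq hPx).deriv
  · refine Tendsto.congr (fun ρ => ?_) (by simpa using (h1.const_mul (γ + 1)).add h2)
    ring

theorem tendsto_pow_mul_iteratedDeriv {C α : ℝ} (hl : ∀ᶠ ρ in l, 0 < ρ)
    (hα : Tendsto (fun ρ : ℝ => ρ ^ α) l (𝓝 0)) (j : ℕ)
    (hQ : ∀ᶠ ρ in l, |iteratedDeriv j Q ρ| ≤ C * ρ ^ (α - j)) :
    Tendsto (fun ρ => ρ ^ j * iteratedDeriv j Q ρ) l (𝓝 0) := by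
  refine squeeze_zero_norm' ?_ (by simpa using hα.const_mul C)
  filter_upwards [hl, hQ] with ρ hρ hQρ
  rw [Real.rpow_sub_natCast hρ.ne'] at hQρ
  calc ‖ρ ^ j * iteratedDeriv j Q ρ‖ = ρ ^ j * |iteratedDeriv j Q ρ| := by
        rw [norm_mul, Real.norm_of_nonneg (pow_pos hρ j).le, Real.norm_eq_abs]
    _ ≤ ρ ^ j * (C * (ρ ^ α / ρ ^ j)) := by gcongr
    _ = C * ρ ^ α := by field_simp

theorem HasPowerAsymptotics.of_perturbed_power_zero {C R α : ℝ} (hκ : κ ≠ 0) (hγ : γ ≠ 0)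
    (hR : 0 < R) (hQ : ContDiffOn ℝ 2 Q (Ioi 0))
    (hP : ∀ ρ ∈ Ioo 0 R, P ρ = κ * ρ ^ γ * (1 + Q ρ)) (hα : 0 < α)
    (hQC : ∀ ρ ∈ Ioo 0 R, ∀ j : ℕ, j ≤ 2 → |iteratedDeriv j Q ρ| ≤ C * ρ ^ (α - j)) :
    HasPowerAsymptotics P γ (𝓝[>] 0) := by
  have hnear : ∀ᶠ ρ in 𝓝[>] 0, ρ ∈ Ioo 0 R := Ioo_mem_nhdsGT hR
  refine .of_eventuallyEq hκ hγ self_mem_nhdsWithin hQ (hnear.mono fun ρ hρ => ?_) fun j hj =>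
    tendsto_pow_mul_iteratedDeriv self_mem_nhdsWithin (tendsto_rpow_nhdsGT_zero hα) j
      (hnear.mono fun ρ hρ => hQC ρ hρ j hj)
  filter_upwards [isOpen_Ioo.mem_nhds hρ] using hP

theorem HasPowerAsymptotics.of_perturbed_power_atTop {C R α : ℝ} (hκ : κ ≠ 0) (hγ : γ ≠ 0)
    (hQ : ContDiffOn ℝ 2 Q (Ioi 0)) (hP : ∀ ρ, R ≤ ρ → P ρ = κ * ρ ^ γ * (1 + Q ρ)) (hα : 0 < α)
    (hQC : ∀ ρ, R ≤ ρ → ∀ j : ℕ, j ≤ 2 → |iteratedDeriv j Q ρ| ≤ C * ρ ^ (-α - j)) :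
    HasPowerAsymptotics P γ atTop := by
  refine .of_eventuallyEq hκ hγ (eventually_gt_atTop 0) hQ
    ((eventually_gt_atTop R).mono fun ρ hρ => ?_) fun j hj => tendsto_pow_mul_iteratedDeriv
      (eventually_gt_atTop 0) (tendsto_rpow_neg_atTop hα) j
      ((eventually_ge_atTop R).mono fun ρ hρ => hQC ρ hρ j hj)
  filter_upwards [Ioi_mem_nhds hρ] with x hx using hP x (le_of_lt hx)

end PowerLaw

section Pressure

open scoped Topology
open Asymptotics

/-- A barotropic pressure law with strictly hyperbolic, genuinely nonlinear (possibly degenerate)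
Euler equations that is asymptotically a power of exponent `γ₁` near the vacuum and `γ₂` at high
density. -/
structure IsPressureLaw (P : ℝ → ℝ) (γ₁ γ₂ : ℝ) : Prop where
  contDiffOn : ContDiffOn ℝ 2 P (Ioi 0)
  tendsto_zero : Tendsto P (𝓝[>] 0) (𝓝 0)
  deriv_pos : ∀ ρ, 0 < ρ → 0 < deriv P ρ
  two_mul_deriv_add_nonneg : ∀ ρ, 0 < ρ → 0 ≤ 2 * deriv P ρ + ρ * deriv (deriv P) ρ
  mem_Ioo_zero : γ₁ ∈ Ioo 1 3
  mem_Ioo_atTop : γ₂ ∈ Ioo 1 3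
  powerAsymptotics_zero : HasPowerAsymptotics P γ₁ (𝓝[>] 0)
  powerAsymptotics_atTop : HasPowerAsymptotics P γ₂ atTop

/-- The sound speed `√(P' ρ)` of the pressure law `P`. -/
noncomputable def soundSpeed (P : ℝ → ℝ) (ρ : ℝ) : ℝ := √(deriv P ρ)

namespace IsPressureLaw

variable {P k e : ℝ → ℝ} {γ γ₁ γ₂ ρ : ℝ} {l : Filter ℝ} (hP : IsPressureLaw P γ₁ γ₂)
include hP

theorem hasDerivAt (hρ : 0 < ρ) : HasDerivAt P (deriv P ρ) ρ :=
  ((hP.contDiffOn.contDiffAt (Ioi_mem_nhds hρ)).differentiableAt two_ne_zero).hasDerivAt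

theorem contDiffOn_deriv : ContDiffOn ℝ 1 (deriv P) (Ioi 0) :=
  hP.contDiffOn.deriv_of_isOpen isOpen_Ioi one_add_one_eq_two.le

theorem soundSpeed_pos (hρ : 0 < ρ) : 0 < soundSpeed P ρ := Real.sqrt_pos.2 (hP.deriv_pos ρ hρ)

theorem sq_soundSpeed (hρ : 0 < ρ) : soundSpeed P ρ ^ 2 = deriv P ρ :=
  Real.sq_sqrt (hP.deriv_pos ρ hρ).le

theorem contDiffOn_soundSpeed : ContDiffOn ℝ 1 (soundSpeed P) (Ioi 0) :=
  hP.contDiffOn_deriv.sqrt fun ρ hρ => (hP.deriv_pos ρ hρ).ne'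

theorem hasDerivAt_soundSpeed (hρ : 0 < ρ) : HasDerivAt (soundSpeed P) (deriv (soundSpeed P) ρ) ρ :=
  ((hP.contDiffOn_soundSpeed.contDiffAt (Ioi_mem_nhds hρ)).differentiableAt
    one_ne_zero).hasDerivAt

theorem two_mul_soundSpeed_mul_deriv (hρ : 0 < ρ) :
    2 * soundSpeed P ρ * deriv (soundSpeed P) ρ = deriv (deriv P) ρ := by
  have hP' : HasDerivAt (deriv P) (deriv (deriv P) ρ) ρ :=
    ((hP.contDiffOn_deriv.contDiffAt (Ioi_mem_nhds hρ)).differentiableAt one_ne_zero).hasDerivAt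
  have hσ : soundSpeed P ρ ≠ 0 := (hP.soundSpeed_pos hρ).ne'
  have hσ' : HasDerivAt (soundSpeed P) (deriv (deriv P) ρ / (2 * soundSpeed P ρ)) ρ :=
    hP'.sqrt (hP.deriv_pos ρ hρ).ne'
  rw [hσ'.deriv]
  exact mul_div_cancel₀ _ (mul_ne_zero two_ne_zero hσ)

theorem neg_soundSpeed_le_mul_deriv (hρ : 0 < ρ) :
    -soundSpeed P ρ ≤ ρ * deriv (soundSpeed P) ρ := by
  have hnonneg : 0 ≤ 2 * soundSpeed P ρ * (soundSpeed P ρ + ρ * deriv (soundSpeed P) ρ) := by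
    refine (hP.two_mul_deriv_add_nonneg ρ hρ).trans_eq ?_
    rw [← hP.sq_soundSpeed hρ, ← hP.two_mul_soundSpeed_mul_deriv hρ]
    ring
  linarith [nonneg_of_mul_nonneg_right hnonneg (mul_pos two_pos (hP.soundSpeed_pos hρ))]

theorem tendsto_mul_deriv_soundSpeed_div (hPγ : HasPowerAsymptotics P γ l)
    (hl : ∀ᶠ ρ in l, 0 < ρ) :
    Tendsto (fun ρ => ρ * deriv (soundSpeed P) ρ / soundSpeed P ρ) l (𝓝 ((γ - 1) / 2)) := by
  refine (hPγ.tendsto_slope.div_const 2).congr' ?_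
  filter_upwards [hl] with ρ hρ
  have hσ := (hP.soundSpeed_pos hρ).ne'
  rw [← hP.two_mul_soundSpeed_mul_deriv hρ, ← hP.sq_soundSpeed hρ]
  field_simp

theorem tendsto_mul_deriv_soundSpeed_div_zero :
    Tendsto (fun ρ => ρ * deriv (soundSpeed P) ρ / soundSpeed P ρ) (𝓝[>] 0) (𝓝 ((γ₁ - 1) / 2)) :=
  hP.tendsto_mul_deriv_soundSpeed_div hP.powerAsymptotics_zero self_mem_nhdsWithin

theorem tendsto_mul_deriv_soundSpeed_div_atTop :
    Tendsto (fun ρ => ρ * deriv (soundSpeed P) ρ / soundSpeed P ρ) atTop (𝓝 ((γ₂ - 1) / 2)) :=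
  hP.tendsto_mul_deriv_soundSpeed_div hP.powerAsymptotics_atTop (eventually_gt_atTop 0)

theorem eventually_mul_deriv_le_soundSpeed :
    ∀ᶠ ρ in 𝓝[>] 0 ⊔ atTop, ρ * deriv (soundSpeed P) ρ ≤ soundSpeed P ρ := by
  have hslope : ∀ᶠ ρ in 𝓝[>] 0 ⊔ atTop, ρ * deriv (soundSpeed P) ρ / soundSpeed P ρ < 1 :=
    eventually_sup.2 ⟨hP.tendsto_mul_deriv_soundSpeed_div_zero.eventually_lt_const
      (by linarith [hP.mem_Ioo_zero.2]),
      hP.tendsto_mul_deriv_soundSpeed_div_atTop.eventually_lt_const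
        (by linarith [hP.mem_Ioo_atTop.2])⟩
  have hpos : ∀ᶠ ρ : ℝ in 𝓝[>] 0 ⊔ atTop, 0 < ρ :=
    eventually_sup.2 ⟨self_mem_nhdsWithin, eventually_gt_atTop 0⟩
  filter_upwards [hslope, hpos] with ρ hlt hρ
  exact ((div_lt_one (hP.soundSpeed_pos hρ)).1 hlt).le

theorem isTheta_soundSpeed (hPγ : HasPowerAsymptotics P γ l) (hl : ∀ᶠ ρ in l, 0 < ρ) :
    soundSpeed P =Θ[l] fun ρ => ρ ^ ((γ - 1) / 2) := by
  refine (hPγ.isTheta_deriv.sqrt (hl.mono fun ρ hρ => (hP.deriv_pos ρ hρ).le)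
    (hl.mono fun ρ hρ => (Real.rpow_pos_of_pos hρ _).le)).trans_eventuallyEq ?_
  filter_upwards [hl] with ρ hρ
  rw [Real.sqrt_eq_rpow, ← Real.rpow_mul hρ.le, div_eq_mul_one_div (γ - 1)]

theorem tendsto_soundSpeed : Tendsto (soundSpeed P) (𝓝[>] 0) (𝓝 0) :=
  (hP.isTheta_soundSpeed hP.powerAsymptotics_zero self_mem_nhdsWithin).tendsto_zero_iff.2
    (tendsto_rpow_nhdsGT_zero (half_pos (sub_pos.2 hP.mem_Ioo_zero.1)))

theorem isTheta_soundSpeed_div :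
    (fun ρ => soundSpeed P ρ / ρ) =Θ[𝓝[>] 0] fun ρ => ρ ^ ((γ₁ - 1) / 2 - 1) := by
  refine ((hP.isTheta_soundSpeed hP.powerAsymptotics_zero self_mem_nhdsWithin).div
    (isTheta_refl (fun ρ => ρ) _)).trans_eventuallyEq ?_
  filter_upwards [self_mem_nhdsWithin] with ρ hρ
  rw [Real.rpow_sub_one (ne_of_gt hρ)]

theorem tendsto_soundSpeed_div : Tendsto (fun ρ => soundSpeed P ρ / ρ) (𝓝[>] 0) atTop := by
  have hnorm := hP.isTheta_soundSpeed_div.tendsto_norm_atTop_iff.2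
    (tendsto_norm_atTop_atTop.comp
      (tendsto_rpow_neg_nhdsGT_zero (by linarith [hP.mem_Ioo_zero.2])))
  refine hnorm.congr' ?_
  filter_upwards [self_mem_nhdsWithin] with ρ hρ
  exact Real.norm_of_nonneg (div_pos (hP.soundSpeed_pos hρ) hρ).le

theorem continuousOn_soundSpeed_div : ContinuousOn (fun ρ => soundSpeed P ρ / ρ) (Ioi 0) :=
  hP.contDiffOn_soundSpeed.continuousOn.div continuousOn_id fun _ hρ => ne_of_gt hρ

theorem integrableOn_soundSpeed_div (R : ℝ) :
    IntegrableOn (fun ρ => soundSpeed P ρ / ρ) (Ioc 0 R) :=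
  integrableOn_Ioc_of_isBigO_rpow hP.continuousOn_soundSpeed_div
    (half_pos (sub_pos.2 hP.mem_Ioo_zero.1)) hP.isTheta_soundSpeed_div.1 R

theorem pos (hρ : 0 < ρ) : 0 < P ρ :=
  pos_of_hasDerivAt_pos_of_tendsto_zero hρ (fun _ hs => hP.hasDerivAt hs.1)
    (fun s hs => hP.deriv_pos s hs.1) hP.tendsto_zero

theorem isBigO_zero : P =O[𝓝[>] 0] fun ρ => ρ ^ γ₁ := by
  have hγ : 0 < γ₁ := one_pos.trans hP.mem_Ioo_zero.1
  refine isBigO_nhdsGT_zero_of_isBigO_deriv (fun ρ hρ => hP.hasDerivAt hρ)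
    (fun ρ hρ => Real.hasDerivAt_rpow_const (.inl hρ.ne')) (fun ρ hρ => hP.pos hρ) ?_
    (hP.powerAsymptotics_zero.isTheta_deriv.1.const_mul_right hγ.ne') hP.tendsto_zero
    (tendsto_rpow_nhdsGT_zero hγ)
  filter_upwards [self_mem_nhdsWithin] with ρ hρ
  exact mul_nonneg hγ.le (Real.rpow_pos_of_pos hρ _).le

theorem isBigO_div_zero (j : ℕ) :
    (fun ρ => P ρ / ρ ^ j) =O[𝓝[>] 0] fun ρ => ρ ^ (γ₁ - j) := by
  refine (hP.isBigO_zero.mul (isBigO_refl (fun ρ => (ρ ^ j)⁻¹) _)).trans_eventuallyEq ?_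
  filter_upwards [self_mem_nhdsWithin] with ρ hρ
  rw [Real.rpow_sub_natCast (ne_of_gt hρ), div_eq_mul_inv]

theorem continuousOn_div_sq : ContinuousOn (fun ρ => P ρ / ρ ^ 2) (Ioi 0) :=
  hP.contDiffOn.continuousOn.div (continuousOn_id.pow 2) fun _ hρ => pow_ne_zero 2 (ne_of_gt hρ)

theorem integrableOn_div_sq (R : ℝ) : IntegrableOn (fun ρ => P ρ / ρ ^ 2) (Ioc 0 R) :=
  integrableOn_Ioc_of_isBigO_rpow hP.continuousOn_div_sq (sub_pos.2 hP.mem_Ioo_zero.1)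
    ((hP.isBigO_div_zero 2).trans_eventuallyEq (.of_eq (by norm_num [sub_sub]))) R

section Energy

variable (he : ∀ ρ, e ρ = ∫ s in 0..ρ, P s / s ^ 2)
include he

theorem hasDerivAt_energy (hρ : 0 < ρ) : HasDerivAt e (P ρ / ρ ^ 2) ρ := by
  obtain rfl : e = fun ρ => ∫ s in 0..ρ, P s / s ^ 2 := funext he
  exact hasDerivAt_integral_zero hP.continuousOn_div_sq hP.integrableOn_div_sq hρ

theorem tendsto_energy : Tendsto e (𝓝[>] 0) (𝓝 0) := by
  obtain rfl : e = fun ρ => ∫ s in 0..ρ, P s / s ^ 2 := funext he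
  exact tendsto_integral_zero (hP.integrableOn_div_sq 1) one_pos

theorem hasDerivAt_mul_energy (hρ : 0 < ρ) :
    HasDerivAt (fun ρ => ρ * e ρ) (e ρ + P ρ / ρ) ρ :=
  ((hasDerivAt_id ρ).mul (hP.hasDerivAt_energy he hρ)).congr_deriv (by simp; field_simp)

theorem tendsto_mul_energy : Tendsto (fun ρ => ρ * e ρ) (𝓝[>] 0) (𝓝 0) := by
  have hid : Tendsto (fun ρ : ℝ => ρ) (𝓝[>] 0) (𝓝 0) := nhdsWithin_le_nhds
  simpa using hid.mul (hP.tendsto_energy he)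

theorem hasDerivAt_energy_add_div (hρ : 0 < ρ) :
    HasDerivAt (fun ρ => e ρ + P ρ / ρ) (ρ * (soundSpeed P ρ / ρ) ^ 2) ρ := by
  refine ((hP.hasDerivAt_energy he hρ).add
    ((hP.hasDerivAt hρ).div (hasDerivAt_id ρ) hρ.ne')).congr_deriv ?_
  rw [div_pow, hP.sq_soundSpeed hρ]
  simp only [id]
  field_simp
  ring

theorem tendsto_energy_add_div : Tendsto (fun ρ => e ρ + P ρ / ρ) (𝓝[>] 0) (𝓝 0) := by
  have hpow := tendsto_rpow_nhdsGT_zero (sub_pos.2 hP.mem_Ioo_zero.1)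
  have hdiv := hP.isBigO_div_zero 1
  simp only [pow_one, Nat.cast_one] at hdiv
  simpa using (hP.tendsto_energy he).add (hdiv.trans_tendsto hpow)

end Energy

section Cone

variable (hk : ∀ ρ, k ρ = ∫ s in 0..ρ, soundSpeed P s / s)
include hk

theorem hasDerivAt_k (hρ : 0 < ρ) : HasDerivAt k (soundSpeed P ρ / ρ) ρ := by
  obtain rfl : k = fun ρ => ∫ s in 0..ρ, soundSpeed P s / s := funext hk
  exact hasDerivAt_integral_zero hP.continuousOn_soundSpeed_div hP.integrableOn_soundSpeed_div hρ

theorem tendsto_k : Tendsto k (𝓝[>] 0) (𝓝 0) := by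
  obtain rfl : k = fun ρ => ∫ s in 0..ρ, soundSpeed P s / s := funext hk
  exact tendsto_integral_zero (hP.integrableOn_soundSpeed_div 1) one_pos

theorem isTheta_k : k =Θ[𝓟 (Ioi 0)] soundSpeed P :=
  isTheta_of_tendsto_mul_deriv_div (fun _ hρ => hP.hasDerivAt_soundSpeed hρ)
    (fun _ hρ => hP.soundSpeed_pos hρ) hP.tendsto_soundSpeed (fun _ hρ => hP.hasDerivAt_k hk hρ)
    (hP.tendsto_k hk) (half_pos (sub_pos.2 hP.mem_Ioo_zero.1))
    (half_pos (sub_pos.2 hP.mem_Ioo_atTop.1)) hP.tendsto_mul_deriv_soundSpeed_div_zero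
    hP.tendsto_mul_deriv_soundSpeed_div_atTop

theorem exists_dampedWave : ∃ W : DampedWave, W.c = (fun ρ => soundSpeed P ρ / ρ) ∧ W.k = k :=
  exists_dampedWave_of_isTheta hP.contDiffOn_soundSpeed (fun _ hρ => hP.soundSpeed_pos hρ)
    (fun _ hρ => hP.neg_soundSpeed_le_mul_deriv hρ) hP.eventually_mul_deriv_le_soundSpeed
    hP.tendsto_soundSpeed_div (fun _ hρ => hP.hasDerivAt_k hk hρ) (hP.tendsto_k hk)
    (hP.isTheta_k hk)

end Cone

end IsPressureLaw

end Pressure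

section SpecialEntropy

open scoped Topology
open Asymptotics

/-- The speed profile `ρ ^ θ(ρ)` of the growth bounds, with the exponent `a` up to the density `R`
and `b` beyond; it jumps at `R` in general. -/
noncomputable def crossoverPower (R a b ρ : ℝ) : ℝ := ρ ^ (if ρ ≤ R then a else b)

variable {R a b γ₁ γ₂ C ρ u : ℝ} {k e f h : ℝ → ℝ} {η p r D A B : ℝ × ℝ → ℝ}

theorem crossoverPower_pos (hρ : 0 < ρ) : 0 < crossoverPower R a b ρ := Real.rpow_pos_of_pos hρ _

theorem sq_crossoverPower (hρ : 0 < ρ) :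
    crossoverPower R a b ρ ^ 2 = ρ ^ (2 * if ρ ≤ R then a else b) := by
  rw [crossoverPower, ← Real.rpow_natCast, ← Real.rpow_mul hρ.le, Nat.cast_ofNat, mul_comm]

theorem mul_crossoverPower (hρ : 0 < ρ) :
    ρ * crossoverPower R a b ρ = ρ ^ ((if ρ ≤ R then a else b) + 1) := by
  rw [crossoverPower, Real.rpow_add_one hρ.ne', mul_comm]

theorem mul_sq_crossoverPower (hρ : 0 < ρ) :
    ρ * crossoverPower R ((a - 1) / 2) ((b - 1) / 2) ρ ^ 2 = ρ ^ (if ρ ≤ R then a else b) := by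
  rw [sq_crossoverPower hρ, mul_comm, ← Real.rpow_add_one hρ.ne']
  split_ifs <;> ring_nf

theorem isTheta_crossoverPower (hf : ContinuousOn f (Ioi 0)) (hf0 : ∀ ρ, 0 < ρ → f ρ ≠ 0)
    (hR : 0 < R) (h₀ : f =Θ[𝓝[>] 0] fun ρ => ρ ^ a) (h₁ : f =Θ[atTop] fun ρ => ρ ^ b) :
    f =Θ[𝓟 (Ioi 0)] crossoverPower R a b := by
  have hpow (a : ℝ) : ContinuousOn (fun ρ : ℝ => ρ ^ a) (Ioi 0) :=
    continuousOn_id.rpow_const fun _ hρ => .inl (ne_of_gt hρ)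
  have hpow0 (a ρ : ℝ) (hρ : 0 < ρ) : ρ ^ a ≠ 0 := (Real.rpow_pos_of_pos hρ a).ne'
  refine (isTheta_piecewise hf hf0 (hpow a) (hpow0 a) (hpow b) (hpow0 b) hR h₀
    h₁).trans_eventuallyEq (.of_eq (funext fun ρ => ?_))
  rw [crossoverPower, apply_ite (ρ ^ ·)]

theorem exists_one_le_forall_le_mul (hh : ∀ ρ, 0 < ρ → 0 < h ρ) (hfh : f =O[𝓟 (Ioi 0)] h) :
    ∃ K, 1 ≤ K ∧ ∀ ρ, 0 < ρ → f ρ ≤ K * h ρ := by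
  obtain ⟨K, hK⟩ := isBigO_principal.1 hfh
  refine ⟨max 1 K, le_max_left _ _, fun ρ hρ => (le_abs_self _).trans ((hK ρ hρ).trans ?_)⟩
  rw [Real.norm_of_nonneg (hh ρ hρ).le]
  exact mul_le_mul_of_nonneg_right (le_max_right _ _) (hh ρ hρ).le

theorem hasEntropyGrowth_crossoverPower_iff :
    HasEntropyGrowth C (crossoverPower R ((γ₁ - 1) / 2) ((γ₂ - 1) / 2)) η p r ↔
      0 < C ∧ ∀ ρ, 0 < ρ → ∀ u,
        |η (ρ, u)| ≤ C * (ρ * u ^ 2 + ρ ^ (if ρ ≤ R then γ₁ else γ₂)) ∧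
        |p (ρ, u)| ≤ C * (u ^ 2 + ρ ^ (2 * if ρ ≤ R then (γ₁ - 1) / 2 else (γ₂ - 1) / 2)) ∧
        |r (ρ, u)| ≤
          C * (ρ * |u| + ρ ^ ((if ρ ≤ R then (γ₁ - 1) / 2 else (γ₂ - 1) / 2) + 1)) := by
  have hiff : HasEntropyGrowth C (crossoverPower R ((γ₁ - 1) / 2) ((γ₂ - 1) / 2)) η p r ↔ _ :=
    ⟨fun h => And.intro h.pos fun ρ hρ u =>
      And.intro (h.abs_le ρ hρ u) (And.intro (h.abs_fst_le ρ hρ u) (h.abs_snd_le ρ hρ u)),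
    fun h => ⟨h.1, fun ρ hρ u => (h.2 ρ hρ u).1, fun ρ hρ u => (h.2 ρ hρ u).2.1,
      fun ρ hρ u => (h.2 ρ hρ u).2.2⟩⟩
  refine hiff.trans (and_congr_right' (forall₃_congr fun ρ hρ u => ?_))
  rw [mul_add ρ, mul_add ρ, mul_sq_crossoverPower hρ, sq_crossoverPower hρ, mul_crossoverPower hρ]

theorem HasPartialsOn.deriv_fst (hη : HasPartialsOn η p r halfPlane) (hρ : 0 < ρ) (u : ℝ) :
    deriv (fun s => η (s, u)) ρ = p (ρ, u) :=
  (hη.fst (ρ, u) (mk_mem_halfPlane.2 hρ)).deriv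

theorem HasPartialsOn.deriv_snd (hη : HasPartialsOn η p r halfPlane) (hρ : 0 < ρ) (u : ℝ) :
    deriv (fun v => η (ρ, v)) u = r (ρ, u) :=
  (hη.snd (ρ, u) (mk_mem_halfPlane.2 hρ)).deriv

namespace HasSecondPartialsOn

variable (hη : HasSecondPartialsOn η p r D A B halfPlane)
include hη

theorem deriv_deriv_fst (hρ : 0 < ρ) (u : ℝ) : deriv (deriv fun s => η (s, u)) ρ = D (ρ, u) := by
  have hderiv : deriv (fun s => η (s, u)) =ᶠ[𝓝 ρ] fun s => p (s, u) := by
    filter_upwards [Ioi_mem_nhds hρ] with s hs using hη.zero.deriv_fst hs u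
  rw [hderiv.deriv_eq, hη.fst.deriv_fst hρ]

theorem deriv_deriv_snd (hρ : 0 < ρ) (u : ℝ) : deriv (deriv fun v => η (ρ, v)) u = B (ρ, u) := by
  rw [funext (hη.zero.deriv_snd hρ), hη.snd.deriv_snd hρ]

theorem isSpecialEntropy_iff :
    IsSpecialEntropy R γ₁ γ₂ k e η ↔
      (∀ ρ, 0 < ρ → ∀ u, (k ρ ≤ u → η (ρ, u) = 1 / 2 * ρ * u ^ 2 + ρ * e ρ) ∧
        (u ≤ -k ρ → η (ρ, u) = -(1 / 2 * ρ * u ^ 2 + ρ * e ρ))) ∧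
      (∀ ρ, 0 < ρ → ∀ u, |u| ≤ k ρ → D (ρ, u) = deriv k ρ ^ 2 * B (ρ, u)) ∧
      ∃ C, HasEntropyGrowth C (crossoverPower R ((γ₁ - 1) / 2) ((γ₂ - 1) / 2)) η p r := by
  refine (and_iff_right (hη.contDiffOn isOpen_halfPlane)).trans (and_congr_right' (and_congr
    (forall₄_congr fun ρ hρ u _ => ?_) (exists_congr fun C => ?_)))
  · rw [hη.deriv_deriv_fst hρ, hη.deriv_deriv_snd hρ]
  · rw [hasEntropyGrowth_crossoverPower_iff]
    refine and_congr_right' (forall₃_congr fun ρ hρ u => ?_)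
    rw [hη.zero.deriv_fst hρ, hη.zero.deriv_snd hρ]

end HasSecondPartialsOn

namespace DampedWave

variable {W : DampedWave}

theorem IsGoursatSolution.isSpecialEntropy
    (hη : W.IsGoursatSolution (fun ρ => ρ * e ρ) C η p r D A B)
    (hk : W.k =O[𝓟 (Ioi 0)] crossoverPower R ((γ₁ - 1) / 2) ((γ₂ - 1) / 2)) :
    IsSpecialEntropy R γ₁ γ₂ W.k e η := by
  obtain ⟨K, hK, hle⟩ := exists_one_le_forall_le_mul (fun _ => crossoverPower_pos) hk
  refine hη.isSpecialEntropy_iff.2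
    ⟨fun ρ hρ u => ⟨hη.eq_of_k_le ρ hρ u, hη.eq_of_le_neg_k ρ hρ u⟩, fun ρ hρ u hu => ?_,
      _, hη.mono (fun _ => W.k_pos) hK hle⟩
  rw [(W.hasDerivAt_k ρ hρ).deriv, hη.wave ρ hρ u hu]

theorem exists_isGoursatSolution_of_isSpecialEntropy (hη : IsSpecialEntropy R γ₁ γ₂ W.k e η)
    (hk : crossoverPower R ((γ₁ - 1) / 2) ((γ₂ - 1) / 2) =O[𝓟 (Ioi 0)] W.k) :
    ∃ C p r D A B, W.IsGoursatSolution (fun ρ => ρ * e ρ) C η p r D A B := by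
  obtain ⟨p, r, D, A, B, hpartials⟩ := exists_hasSecondPartialsOn isOpen_halfPlane hη.1
  obtain ⟨hdata, hwave, C, hgrowth⟩ := hpartials.isSpecialEntropy_iff.1 hη
  obtain ⟨K, hK, hle⟩ := exists_one_le_forall_le_mul (fun _ => W.k_pos) hk
  refine ⟨C * K ^ 2, p, r, D, A, B, hpartials, hgrowth.mono (fun _ => crossoverPower_pos) hK hle,
    fun ρ hρ u => (hdata ρ hρ u).1, fun ρ hρ u => (hdata ρ hρ u).2, fun ρ hρ u hu => ?_⟩
  rw [hwave ρ hρ u hu, (W.hasDerivAt_k ρ hρ).deriv]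

end DampedWave

theorem IsPressureLaw.isTheta_k_crossoverPower {P : ℝ → ℝ} (hP : IsPressureLaw P γ₁ γ₂)
    (hR : 0 < R) (hk : ∀ ρ, k ρ = ∫ s in 0..ρ, soundSpeed P s / s) :
    k =Θ[𝓟 (Ioi 0)] crossoverPower R ((γ₁ - 1) / 2) ((γ₂ - 1) / 2) :=
  (hP.isTheta_k hk).trans (isTheta_crossoverPower hP.contDiffOn_soundSpeed.continuousOn
    (fun _ hρ => (hP.soundSpeed_pos hρ).ne') hR
    (hP.isTheta_soundSpeed hP.powerAsymptotics_zero self_mem_nhdsWithin)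
    (hP.isTheta_soundSpeed hP.powerAsymptotics_atTop (eventually_gt_atTop 0)))

end SpecialEntropy

theorem special_entropy_exists_unique_general {P k e : ℝ → ℝ} {ρstar γ₁ γ₂ : ℝ}
    (hP : IsPressureLaw P γ₁ γ₂) (hρstar : 0 < ρstar)
    (hk : ∀ ρ, k ρ = ∫ y in 0..ρ, √(deriv P y) / y) (he : ∀ ρ, e ρ = ∫ s in 0..ρ, P s / s ^ 2) :
    ∃ η : ℝ × ℝ → ℝ, IsSpecialEntropy ρstar γ₁ γ₂ k e η ∧
      ∀ η' : ℝ × ℝ → ℝ, IsSpecialEntropy ρstar γ₁ γ₂ k e η' →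
        ∀ ρ : ℝ, 0 < ρ → ∀ u : ℝ, η' (ρ, u) = η (ρ, u) := by
  have hkΘ := hP.isTheta_k_crossoverPower hρstar hk
  obtain ⟨W, hWc, rfl⟩ := hP.exists_dampedWave hk
  obtain ⟨C, η, p, r, D, A, B, hη⟩ := W.exists_isGoursatSolution
    (fun _ hs => hP.hasDerivAt_mul_energy he hs) (hP.tendsto_mul_energy he)
    (fun _ hs => hWc ▸ hP.hasDerivAt_energy_add_div he hs) (hP.tendsto_energy_add_div he)
  refine ⟨η, hη.isSpecialEntropy hkΘ.1, fun η' hη' ρ hρ u => ?_⟩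
  obtain ⟨C', p', r', D', A', B', hη'⟩ := W.exists_isGoursatSolution_of_isSpecialEntropy hη' hkΘ.2
  exact hη'.unique hη (ρ, u) (mk_mem_halfPlane.2 hρ)

theorem special_entropy_exists_unique
    (P Q₁ Q₂ : ℝ → ℝ) (ρstar ρss γ₁ γ₂ κ₁ κ₂ Cs Css εe : ℝ)
    (hPC1 : ContDiffOn ℝ 1 P (Ici 0))
    (hPC4 : ContDiffOn ℝ 4 P (Ioi 0))
    (hH1 : ∀ ρ : ℝ, 0 < ρ → 0 < deriv P ρ ∧ 0 < 2 * deriv P ρ + ρ * deriv (deriv P) ρ)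
    (hρstar : 0 < ρstar) (hγ₁ : 1 < γ₁) (hγ₁3 : γ₁ < 3) (hκ₁ : 0 < κ₁) (hCs : 0 < Cs)
    (hQ₁C4 : ContDiffOn ℝ 4 Q₁ (Ioi 0))
    (hPsmall : ∀ ρ ∈ Ico (0:ℝ) ρstar, P ρ = κ₁ * ρ ^ γ₁ * (1 + Q₁ ρ))
    (hQ₁bd : ∀ ρ ∈ Ioo (0:ℝ) ρstar, ∀ j : ℕ, j ≤ 4 →
      |iteratedDeriv j Q₁ ρ| ≤ Cs * ρ ^ (γ₁ - 1 - (j : ℝ)))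
    (hρss : ρstar < ρss) (hγ₂ : 6/5 < γ₂) (hγ₂1 : γ₂ ≤ γ₁) (hκ₂ : 0 < κ₂)
    (hεe : 0 < εe) (hCss : 0 < Css)
    (hQ₂C4 : ContDiffOn ℝ 4 Q₂ (Ioi 0))
    (hPlarge : ∀ ρ : ℝ, ρss ≤ ρ → P ρ = κ₂ * ρ ^ γ₂ * (1 + Q₂ ρ))
    (hQ₂bd : ∀ ρ : ℝ, ρss ≤ ρ → ∀ j : ℕ, j ≤ 4 →
      |iteratedDeriv j Q₂ ρ| ≤ Css * ρ ^ (-εe - (j : ℝ)))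
    (k e : ℝ → ℝ)
    (hk : ∀ ρ : ℝ, k ρ = ∫ y in (0:ℝ)..ρ, Real.sqrt (deriv P y) / y)
    (he : ∀ ρ : ℝ, e ρ = ∫ s in (0:ℝ)..ρ, P s / s ^ 2) :
    ∃ η : ℝ × ℝ → ℝ, IsSpecialEntropy ρstar γ₁ γ₂ k e η ∧
      ∀ η' : ℝ × ℝ → ℝ, IsSpecialEntropy ρstar γ₁ γ₂ k e η' →
        ∀ ρ : ℝ, 0 < ρ → ∀ u : ℝ, η' (ρ, u) = η (ρ, u) :=
  special_entropy_exists_unique_general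
    { contDiffOn := hPC4.of_le (by norm_num)
      tendsto_zero := by
        have hzero : P 0 = 0 := by simp [hPsmall 0 ⟨le_rfl, hρstar⟩, (one_pos.trans hγ₁).ne']
        simpa [ContinuousWithinAt, hzero] using
          (hPC1.continuousOn 0 self_mem_Ici).mono Ioi_subset_Ici_self
      deriv_pos := fun ρ hρ => (hH1 ρ hρ).1
      two_mul_deriv_add_nonneg := fun ρ hρ => (hH1 ρ hρ).2.le
      mem_Ioo_zero := ⟨hγ₁, hγ₁3⟩
      mem_Ioo_atTop := ⟨by linarith, by linarith⟩
      powerAsymptotics_zero := .of_perturbed_power_zero hκ₁.ne' (by linarith) hρstar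
        (hQ₁C4.of_le (by norm_num)) (fun ρ hρ => hPsmall ρ ⟨hρ.1.le, hρ.2⟩) (sub_pos.2 hγ₁)
        fun ρ hρ j hj => hQ₁bd ρ hρ j (hj.trans (by norm_num))
      powerAsymptotics_atTop := .of_perturbed_power_atTop hκ₂.ne' (by linarith)
        (hQ₂C4.of_le (by norm_num)) hPlarge hεe
        fun ρ hρ j hj => hQ₂bd ρ hρ j (hj.trans (by norm_num)) }
    hρstar hk he
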